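/- arXiv:math/0503370 — 7 statements merged into one kernel-verified Lean document; each statement's English description precedes it below -/
import Mathlib

section
/- Let g be a finite-dimensional Lie algebra over a field K of characteristic 0 and let Γ be a completely reducible Lie subalgebra of Der g. Then there exists a Levi subalgebra s of g such that Γ·s ⊆ s. -/
/-!
STATEMENT 2: Let `g` be a finite-dimensional Lie algebra over a field `K` of characteristic 0
and let `Γ` be a completely reducible Lie subalgebra of `Der g`.  Then there exists a Levi
subalgebra `s` of `g` such that `Γ·s ⊆ s`.
-/

variable (K L : Type*) [Field K] [CharZero K] [LieRing L] [LieAlgebra K L]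

/-- A set of derivations acts completely reducibly on `L` if every invariant subspace
has an invariant complement. -/
def IsCompletelyReducible (Γ : Set (LieDerivation K L L)) : Prop :=
  ∀ W : Submodule K L, (∀ α ∈ Γ, ∀ x ∈ W, α x ∈ W) →
    ∃ W' : Submodule K L, IsCompl W W' ∧ ∀ α ∈ Γ, ∀ x ∈ W', α x ∈ W'

/-- A Levi subalgebra of `L`: a semisimple Lie subalgebra `s` such that
`L = s ⊕ radical L` as vector spaces. -/
def IsLeviSubalgebra (s : LieSubalgebra K L) : Prop :=
  LieAlgebra.IsSemisimple K s ∧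
    IsCompl s.toSubmodule (LieAlgebra.radical K L).toSubmodule

/-!
The Lie bracket on `Γ` plays no role: the argument works for any completely reducible family `D`
of derivations. Let `π : L → S` be the quotient by the radical, so that the Killing form of `S` is
nondegenerate. In characteristic zero every derivation preserves the radical
(`ker_stable_of_isSolvable`), and induces an inner derivation of `S` (`exists_inner_mod`).

`levi_family` produces a `D`-stable subalgebra complementary to `ker π` by induction on `dim L`,
for any surjection `π` onto `S` with solvable `D`-stable kernel. If `ker π` properly contains a
nonzero `D`-stable ideal `I` of `L`, the induction hypothesis for `L ⧸ I` gives a stable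
complement there, and the induction hypothesis for its preimage in `L` gives the complement sought.
Otherwise `R = ker π` is minimal, hence abelian, and there are two cases.

* If `⁅L, R⁆ = 0`, then `⁅L, L⁆` is the complement (`levi_of_trivial_action`): for a linear form
  `l` on `L`, the alternating form `l ⁅x, y⁆` descends to `S` and is a cocycle there; since
  derivations of `S` are inner it equals `κ(z, ⁅x, y⁆)` for the Killing form `κ`, so `l` vanishes
  on `⁅L, L⁆ ∩ R`.
* Otherwise let `m` be the Killing complement in `S` of the image of the annihilator of `R`. By
  Cartan's criterion and the minimality of `R`, the trace form of `R` is nondegenerate on `m`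
  (`traceForm_ker_nondegenerate`), and the associated Casimir operator `C` on `R` commutes with
  `L` and with `D`, has trace `dim m ≠ 0`, and is therefore injective by minimality
  (`exists_injective_casimir`). Complete reducibility gives a `D`-equivariant linear projection
  `p` onto `R`. Contracting the maps `x ↦ ⁅y, p x⁆ - p ⁅y, x⁆` with the Casimir element gives a
  linear map `Q : L → R` with `Q ⁅x, y⁆ = ⁅x, Q y⁆ - ⁅y, Q x⁆` which commutes with `D` and restricts
  to `C` on `R`. Its kernel is the complement (`levi_of_minimal`).
-/

open LieAlgebra

/-! ### Passing to quotients -/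

theorem exists_linear_section {K L S : Type*} [Field K] [LieRing L] [LieAlgebra K L]
    [LieRing S] [LieAlgebra K S] (π : L →ₗ⁅K⁆ S) (hπ : Function.Surjective π) :
    ∃ σ : S →ₗ[K] L, ∀ s, π (σ s) = s := by
  obtain ⟨σ, hσ⟩ := (π : L →ₗ[K] S).exists_rightInverse_of_surjective
    (LinearMap.range_eq_top.mpr hπ)
  exact ⟨σ, fun s => LinearMap.congr_fun hσ s⟩

theorem exists_derivation_quotient {K L M : Type*} [Field K] [LieRing L] [LieAlgebra K L]
    [LieRing M] [LieAlgebra K M] (ρ : L →ₗ⁅K⁆ M) (hρ : Function.Surjective ρ)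
    (D : LieDerivation K L L) (hD : ∀ x, ρ x = 0 → ρ (D x) = 0) :
    ∃ E : LieDerivation K M M, ∀ x, E (ρ x) = ρ (D x) := by
  obtain ⟨σ, hσ⟩ := exists_linear_section ρ hρ
  have key : ∀ x, ρ (D (σ (ρ x))) = ρ (D x) := by
    intro x
    have := hD (σ (ρ x) - x) (by simp [hσ])
    rwa [map_sub, map_sub, sub_eq_zero] at this
  refine ⟨{ toLinearMap := (ρ : L →ₗ[K] M) ∘ₗ (D : L →ₗ[K] L) ∘ₗ σ, leibniz' := ?_ }, key⟩
  intro s t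
  obtain ⟨x, rfl⟩ := hρ s
  obtain ⟨y, rfl⟩ := hρ t
  have h : ρ (D (σ ⁅ρ x, ρ y⁆)) = ρ (D ⁅x, y⁆) := by
    rw [← LieHom.map_lie, key]
  simp [h, key]

theorem exists_hom_quotient {K L M S : Type*} [Field K] [LieRing L] [LieAlgebra K L]
    [LieRing M] [LieAlgebra K M] [LieRing S] [LieAlgebra K S]
    (ρ : L →ₗ⁅K⁆ M) (hρ : Function.Surjective ρ) (π : L →ₗ⁅K⁆ S)
    (h : ∀ x, ρ x = 0 → π x = 0) :
    ∃ π' : M →ₗ⁅K⁆ S, ∀ x, π' (ρ x) = π x := by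
  obtain ⟨σ, hσ⟩ := exists_linear_section ρ hρ
  have key : ∀ x, π (σ (ρ x)) = π x := by
    intro x
    have := h (σ (ρ x) - x) (by simp [hσ])
    rwa [map_sub, sub_eq_zero] at this
  refine ⟨{ (π : L →ₗ[K] S) ∘ₗ σ with map_lie' := ?_ }, key⟩
  intro s t
  obtain ⟨x, rfl⟩ := hρ s
  obtain ⟨y, rfl⟩ := hρ t
  change π (σ ⁅ρ x, ρ y⁆) = ⁅π (σ (ρ x)), π (σ (ρ y))⁆
  rw [← LieHom.map_lie, key, key, key, LieHom.map_lie]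

theorem exists_quotient_hom {K L : Type*} [Field K] [LieRing L] [LieAlgebra K L]
    (I : LieIdeal K L) :
    ∃ ρ : L →ₗ⁅K⁆ L ⧸ I, Function.Surjective ρ ∧ ∀ x, ρ x = 0 ↔ x ∈ I :=
  ⟨{ (LieSubmodule.Quotient.mk' I : L →ₗ[K] L ⧸ I) with map_lie' := rfl },
    LieSubmodule.Quotient.surjective_mk' I, fun _ => LieSubmodule.Quotient.mk_eq_zero I⟩

/-! ### Derivations modulo a solvable ideal -/

/-- A derivation preserving the kernel of a surjection onto a Lie algebra with nondegenerate
Killing form acts as an inner derivation modulo that kernel. -/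
theorem exists_inner_mod {K L S : Type*} [Field K] [LieRing L] [LieAlgebra K L]
    [LieRing S] [LieAlgebra K S] [FiniteDimensional K S] [IsKilling K S]
    (π : L →ₗ⁅K⁆ S) (hπ : Function.Surjective π) (D : LieDerivation K L L)
    (hD : ∀ x, π x = 0 → π (D x) = 0) :
    ∃ z : L, ∀ x, π (D x) = ⁅π z, π x⁆ := by
  obtain ⟨E, hE⟩ := exists_derivation_quotient π hπ D hD
  obtain ⟨s, hs⟩ := LieDerivation.IsKilling.exists_eq_ad E
  obtain ⟨z, rfl⟩ := hπ s
  refine ⟨z, fun x => ?_⟩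
  rw [← hE, ← hs, LieDerivation.ad_apply_apply]

theorem ideal_stable {K L S : Type*} [Field K] [LieRing L] [LieAlgebra K L]
    [LieRing S] [LieAlgebra K S] [FiniteDimensional K S] [IsKilling K S]
    (π : L →ₗ⁅K⁆ S) (hπ : Function.Surjective π) (D : LieDerivation K L L)
    (hD : ∀ x, π x = 0 → π (D x) = 0) (A : LieIdeal K L) (hA : ∀ x, π x = 0 → x ∈ A) :
    ∀ x ∈ A, D x ∈ A := by
  obtain ⟨z, hz⟩ := exists_inner_mod π hπ D hD
  intro x hx
  have h1 : D x - ⁅z, x⁆ ∈ A := hA _ (by simp [hz])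
  simpa using add_mem h1 (lie_mem_right K L A z x hx)

/-- In characteristic zero the solvable kernel `R` of a surjection onto `S` is stable under every
derivation `D`. If not, then for each `k` there are `n` and a nonzero ideal `a` of `S` all of whose
elements have the form `π (D^n r)` with `r` in the `k`-th derived ideal of `R` and `π (D^j r) = 0`
for `j < n`: start from `a = π (D R)` and `n = 1`, and pass from `(n, a)` to `(2n, ⁅a, a⁆)` by the
Leibniz formula, in which only the term with coefficient `(2n).choose n` survives. This contradicts
the solvability of `R`. -/
theorem ker_stable_of_isSolvable {K L S : Type*} [Field K] [CharZero K] [LieRing L]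
    [LieAlgebra K L] [LieRing S] [LieAlgebra K S] [FiniteDimensional K S] [IsKilling K S]
    (π : L →ₗ⁅K⁆ S) (hπ : Function.Surjective π) (hsol : IsSolvable π.ker)
    (D : LieDerivation K L L) : ∀ x, π x = 0 → π (D x) = 0 := by
  by_contra hcon
  push Not at hcon
  have hsmul : ∀ (j : ℕ) (c : K) (x : L), D^[j] (c • x) = c • D^[j] x := by
    intro j c x
    induction j with
    | zero => rfl
    | succ j ih => rw [Function.iterate_succ_apply', ih, map_smul, Function.iterate_succ_apply']
  have hP : ∀ k, ∃ (n : ℕ) (a : LieIdeal K S), a ≠ ⊥ ∧ ∀ s ∈ a,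
      ∃ r ∈ derivedSeriesOfIdeal K L k π.ker, (∀ j < n, π (D^[j] r) = 0) ∧ π (D^[n] r) = s := by
    intro k
    induction k with
    | zero =>
      let a : LieIdeal K S :=
        { carrier := {s | ∃ r, π r = 0 ∧ π (D r) = s}
          add_mem' := by
            rintro _ _ ⟨r, hr, rfl⟩ ⟨r', hr', rfl⟩
            exact ⟨r + r', by simp [hr, hr'], by simp⟩
          zero_mem' := ⟨0, by simp, by simp⟩
          smul_mem' := by
            rintro c _ ⟨r, hr, rfl⟩
            exact ⟨c • r, by simp [hr], by simp⟩
          lie_mem := by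
            rintro s _ ⟨r, hr, rfl⟩
            obtain ⟨x, rfl⟩ := hπ s
            exact ⟨⁅x, r⁆, by simp [hr], by
              rw [LieDerivation.apply_lie_eq_add, map_add, LieHom.map_lie, LieHom.map_lie, hr,
                lie_zero, add_zero]⟩ }
      refine ⟨1, a, ?_, ?_⟩
      · intro h
        obtain ⟨x, hx, hx'⟩ := hcon
        have : π (D x) ∈ a := ⟨x, hx, rfl⟩
        rw [h] at this
        exact hx' (by simpa using this)
      · rintro s ⟨r, hr, rfl⟩
        refine ⟨r, LieHom.mem_ker.mpr hr, fun j hj => ?_, rfl⟩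
        obtain rfl : j = 0 := by omega
        exact hr
    | succ k ih =>
      obtain ⟨n, a, ha, hr⟩ := ih
      refine ⟨n + n, ⁅a, a⁆, ?_, ?_⟩
      · intro h
        apply ha
        have : IsLieAbelian a := by
          refine ⟨?_⟩
          rintro ⟨x, hx⟩ ⟨y, hy⟩
          have hxy : ⁅x, y⁆ ∈ ⁅a, a⁆ := LieSubmodule.lie_mem_lie hx hy
          rw [h] at hxy
          exact Subtype.ext (by simpa using hxy)
        exact IsKilling.ideal_eq_bot_of_isLieAbelian a
      · intro s hs
        have hs' : s ∈ Submodule.span K {z : S | ∃ x ∈ a, ∃ y ∈ a, ⁅x, y⁆ = z} := by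
          have := LieSubmodule.lieIdeal_oper_eq_linear_span' (R := K) (N := a) (I := a)
          rw [← this]
          exact hs
        clear hs
        induction hs' using Submodule.span_induction with
        | mem z h =>
          obtain ⟨x, hx, y, hy, rfl⟩ := h
          obtain ⟨u, hu, hu0, rfl⟩ := hr x hx
          obtain ⟨v, hv, hv0, rfl⟩ := hr y hy
          have hc : ((n + n).choose n : K) ≠ 0 := by
            exact_mod_cast (Nat.choose_pos (Nat.le_add_left n n)).ne'
          refine ⟨((n + n).choose n : K)⁻¹ • ⁅u, v⁆, ?_, ?_, ?_⟩
          · rw [derivedSeriesOfIdeal_succ]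
            exact Submodule.smul_mem (LieSubmodule.toSubmodule _) _ (LieSubmodule.lie_mem_lie hu hv)
          · intro j hj
            rw [hsmul, LieDerivation.iterate_apply_lie, map_smul, map_sum,
              Finset.sum_eq_zero, smul_zero]
            intro p hp
            rw [Finset.HasAntidiagonal.mem_antidiagonal] at hp
            rw [map_nsmul, LieHom.map_lie]
            rcases lt_or_ge p.1 n with h | h
            · rw [hu0 _ h, zero_lie, smul_zero]
            · rw [hv0 p.2 (by omega), lie_zero, smul_zero]
          · rw [hsmul, LieDerivation.iterate_apply_lie, map_smul, map_sum,
              Finset.sum_eq_single (n, n)]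
            · rw [map_nsmul, LieHom.map_lie, ← Nat.cast_smul_eq_nsmul K, smul_smul,
                inv_mul_cancel₀ hc, one_smul]
            · intro p hp hne
              rw [Finset.HasAntidiagonal.mem_antidiagonal] at hp
              rw [map_nsmul, LieHom.map_lie]
              rcases lt_or_ge p.1 n with h | h
              · rw [hu0 _ h, zero_lie, smul_zero]
              · rw [hv0 p.2 ?_, lie_zero, smul_zero]
                by_contra h2
                exact hne (Prod.ext (by simp; omega) (by simp; omega))
            · intro h
              simp at h
        | zero =>
          exact ⟨0, zero_mem _, fun j _ => by rw [iterate_map_zero, map_zero],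
            by rw [iterate_map_zero, map_zero]⟩
        | add x y _ _ hx hy =>
          obtain ⟨u, hu, hu0, rfl⟩ := hx
          obtain ⟨v, hv, hv0, rfl⟩ := hy
          exact ⟨u + v, add_mem hu hv,
            fun j hj => by rw [iterate_map_add, map_add, hu0 j hj, hv0 j hj, add_zero],
            by rw [iterate_map_add, map_add]⟩
        | smul c x _ hx =>
          obtain ⟨u, hu, hu0, rfl⟩ := hx
          exact ⟨c • u, Submodule.smul_mem (LieSubmodule.toSubmodule _) _ hu,
            fun j hj => by rw [hsmul, map_smul, hu0 j hj, smul_zero],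
            by rw [hsmul, map_smul]⟩
  obtain ⟨k, hk⟩ := IsSolvable.solvable K π.ker
  rw [LieIdeal.derivedSeries_eq_bot_iff] at hk
  obtain ⟨n, a, ha, h⟩ := hP k
  apply ha
  rw [LieSubmodule.eq_bot_iff]
  intro s hs
  obtain ⟨r, hr, -, rfl⟩ := h s hs
  rw [hk] at hr
  have : r = 0 := by simpa using hr
  rw [this, iterate_map_zero, map_zero]

theorem hasTrivialRadical_quotient {K L : Type*} [Field K] [LieRing L] [LieAlgebra K L]
    [FiniteDimensional K L] : HasTrivialRadical K (L ⧸ radical K L) := by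
  rw [hasTrivialRadical_iff_no_abelian_ideals]
  intro A hA
  obtain ⟨ρ, hρ, hρ0⟩ := exists_quotient_hom (radical K L)
  have hle : ⁅A.comap ρ, A.comap ρ⁆ ≤ radical K L := by
    rw [LieSubmodule.lie_le_iff]
    intro x hx y hy
    rw [LieIdeal.mem_comap] at hx hy
    rw [← hρ0, LieHom.map_lie]
    exact congrArg Subtype.val (hA.trivial ⟨ρ x, hx⟩ ⟨ρ y, hy⟩)
  have hsol : IsSolvable (A.comap ρ) := by
    obtain ⟨k, hk⟩ := IsSolvable.solvable K (radical K L)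
    rw [LieIdeal.derivedSeries_eq_bot_iff] at hk
    refine IsSolvable.mk (R := K) (k := k + 1) ?_
    rw [LieIdeal.derivedSeries_eq_bot_iff, derivedSeriesOfIdeal_add, derivedSeriesOfIdeal_succ,
      derivedSeriesOfIdeal_zero, eq_bot_iff, ← hk]
    exact derivedSeriesOfIdeal_mono hle k
  rw [LieIdeal.solvable_iff_le_radical] at hsol
  rw [LieSubmodule.eq_bot_iff]
  intro y hy
  obtain ⟨x, rfl⟩ := hρ y
  exact (hρ0 x).mpr (hsol (LieIdeal.mem_comap.mpr hy))

/-! ### The case of a central kernel -/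

theorem span_lie_eq_top {K S : Type*} [Field K] [LieRing S] [LieAlgebra K S]
    [FiniteDimensional K S] [IsKilling K S] :
    Submodule.span K {z : S | ∃ x y : S, ⁅x, y⁆ = z} = ⊤ := by
  by_contra hne
  obtain ⟨f, hf0, hf⟩ := Submodule.exists_le_ker_of_lt_top _ (lt_top_iff_ne_top.mpr hne)
  have hnd := IsKilling.killingForm_nondegenerate K S
  obtain ⟨x, rfl⟩ := ((killingForm K S).toDual hnd).surjective f
  apply hf0
  have hx : x ∈ LieAlgebra.center K S := by
    rw [LieModule.mem_maxTrivSubmodule]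
    intro y
    refine hnd.1 _ fun z => ?_
    rw [LieModule.traceForm_comm, LieModule.traceForm_comm, ← lie_skew, map_neg,
      LinearMap.neg_apply, LieModule.traceForm_apply_lie_apply]
    have : ⁅y, z⁆ ∈ Submodule.span K {z : S | ∃ x y : S, ⁅x, y⁆ = z} :=
      Submodule.subset_span ⟨y, z, rfl⟩
    have := hf this
    rw [LinearMap.mem_ker, LinearMap.BilinForm.toDual_def] at this
    simpa using this
  have h0 : x = 0 := by simpa using hx
  rw [h0, map_zero]

theorem levi_of_trivial_action {K L S : Type*} [Field K] [LieRing L] [LieAlgebra K L]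
    [LieRing S] [LieAlgebra K S] [FiniteDimensional K S] [IsKilling K S]
    (π : L →ₗ⁅K⁆ S) (hπ : Function.Surjective π)
    (htriv : ∀ x r : L, π r = 0 → ⁅x, r⁆ = 0) :
    ∃ t : LieSubalgebra K L, (∀ (D : LieDerivation K L L), ∀ x ∈ t, D x ∈ t) ∧
      (∀ x ∈ t, π x = 0 → x = 0) ∧ ∀ s, ∃ x ∈ t, π x = s := by
  let W : Submodule K L := Submodule.span K {z : L | ∃ x y : L, ⁅x, y⁆ = z}
  have hW : ∀ x y : L, ⁅x, y⁆ ∈ W := fun x y => Submodule.subset_span ⟨x, y, rfl⟩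
  refine ⟨{ W with lie_mem' := fun _ _ => hW _ _ }, ?_, ?_, ?_⟩
  · intro D x hx
    change x ∈ W at hx
    change D x ∈ W
    induction hx using Submodule.span_induction with
    | mem x h =>
      obtain ⟨a, b, rfl⟩ := h
      rw [LieDerivation.apply_lie_eq_add]
      exact add_mem (hW _ _) (hW _ _)
    | zero => simp
    | add x y _ _ hx hy => rw [map_add]; exact add_mem hx hy
    | smul c x _ hx => rw [map_smul]; exact W.smul_mem _ hx
  · intro v hv hv0
    change v ∈ W at hv
    obtain ⟨σ, hσ⟩ := exists_linear_section π hπ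
    rw [← Module.forall_dual_apply_eq_zero_iff K v]
    intro l
    have hnd := IsKilling.killingForm_nondegenerate K S
    let ω : S →ₗ[K] S →ₗ[K] K := LinearMap.mk₂ K (fun s t => l ⁅σ s, σ t⁆)
      (by intros; simp) (by intros; simp) (by intros; simp) (by intros; simp)
    have hω : ∀ x y : L, ω (π x) (π y) = l ⁅x, y⁆ := by
      intro x y
      have h1 : ⁅σ (π x), σ (π y) - y⁆ = 0 := htriv _ _ (by simp [hσ])
      have h2 : ⁅y, σ (π x) - x⁆ = 0 := htriv _ _ (by simp [hσ])
      rw [lie_sub, sub_eq_zero] at h1 h2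
      change l ⁅σ (π x), σ (π y)⁆ = _
      rw [h1, ← lie_skew, h2, lie_skew]
    let δ : S →ₗ[K] S := ((killingForm K S).toDual hnd).symm.toLinearMap ∘ₗ ω
    have hδ : ∀ s t, killingForm K S (δ s) t = ω s t := by
      intro s t
      exact LinearMap.BilinForm.apply_toDual_symm_apply (hB := hnd) (ω s) t
    let D : LieDerivation K S S :=
      { toLinearMap := δ
        leibniz' := by
          intro s t
          rw [← sub_eq_zero]
          refine hnd.1 _ fun u => ?_
          have e : ∀ a b c : S, killingForm K S ⁅a, b⁆ c = - killingForm K S b ⁅a, c⁆ := by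
            intro a b c
            rw [← lie_skew, map_neg, LinearMap.neg_apply, LieModule.traceForm_apply_lie_apply]
          obtain ⟨x, rfl⟩ := hπ s
          obtain ⟨y, rfl⟩ := hπ t
          obtain ⟨z, rfl⟩ := hπ u
          simp only [map_sub, LinearMap.sub_apply, e, hδ, ← LieHom.map_lie, hω]
          rw [lie_lie, map_sub]
          ring }
    obtain ⟨z, hz⟩ := LieDerivation.IsKilling.exists_eq_ad D
    have hl : ∀ x y : L, l ⁅x, y⁆ = killingForm K S z (π ⁅x, y⁆) := by
      intro x y
      have := LieDerivation.congr_fun hz (π x)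
      rw [← hω, ← hδ, LieHom.map_lie, ← LieModule.traceForm_apply_lie_apply]
      change killingForm K S (D (π x)) _ = _
      rw [← this]
      simp
    have : ∀ w ∈ W, l w = killingForm K S z (π w) := by
      intro w hw
      induction hw using Submodule.span_induction with
      | mem x h =>
        obtain ⟨a, b, rfl⟩ := h
        exact hl a b
      | zero => simp
      | add x y _ _ hx hy => simp [hx, hy]
      | smul c x _ hx => simp [hx]
    rw [this v hv, hv0, map_zero]
  · intro s
    have hs : s ∈ Submodule.span K {z : S | ∃ x y : S, ⁅x, y⁆ = z} := by
      rw [span_lie_eq_top]; trivial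
    suffices h : s ∈ W.map (π : L →ₗ[K] S) from h
    induction hs using Submodule.span_induction with
    | mem x h =>
      obtain ⟨a, b, rfl⟩ := h
      obtain ⟨a, rfl⟩ := hπ a
      obtain ⟨b, rfl⟩ := hπ b
      exact ⟨⁅a, b⁆, hW a b, by simp⟩
    | zero => simp
    | add x y _ _ hx hy => exact add_mem hx hy
    | smul c x _ hx => exact Submodule.smul_mem _ _ hx

/-! ### The Casimir element -/

/-- If an invariant symmetric form `β` is nondegenerate on an ideal `m`, then a basis `e` of `m` and
its `β`-dual basis `f` give an element `∑ e i ⊗ f i` invariant under `S`. Invariance is expressed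
through an arbitrary bilinear map `B` in place of the tensor product. -/
theorem exists_casimir {K S : Type*} [Field K] [LieRing S] [LieAlgebra K S]
    [FiniteDimensional K S] (m : LieIdeal K S) (β : LinearMap.BilinForm K S)
    (hsymm : ∀ x y, β x y = β y x)
    (hinv : ∀ x y z : S, β ⁅x, y⁆ z = -β y ⁅x, z⁆)
    (hnd : ∀ x ∈ m, (∀ y ∈ m, β x y = 0) → x = 0)
    (V : Type*) [AddCommGroup V] [Module K V] :
    ∃ e f : Fin (Module.finrank K m) → S, (∀ i, β (e i) (f i) = 1) ∧
      ∀ (B : S →ₗ[K] S →ₗ[K] V) (s : S),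
        ∑ i, (B ⁅s, e i⁆ (f i) + B (e i) ⁅s, f i⁆) = 0 := by
  classical
  let b := Module.finBasis K m
  let γ : LinearMap.BilinForm K m := β.restrict m.toSubmodule
  have hγs : γ.IsSymm := ⟨fun x y => hsymm x y⟩
  have hγ : γ.Nondegenerate := by
    refine hγs.isRefl.nondegenerate_iff_separatingLeft.mpr ?_
    intro x hx
    exact Subtype.ext (hnd x x.2 fun y hy => hx ⟨y, hy⟩)
  let f := γ.dualBasis hγ b
  have hrepf : ∀ x (hx : x ∈ m), x = ∑ j, β (b j) x • (f j : S) := by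
    intro x hx
    have := congrArg Subtype.val (f.sum_repr ⟨x, hx⟩)
    simp only [f, LinearMap.BilinForm.dualBasis_repr_apply] at this
    refine this.symm.trans ?_
    rw [AddSubmonoidClass.coe_finsetSum]
    refine Finset.sum_congr rfl fun j _ => ?_
    rw [hsymm]; rfl
  have hrepb : ∀ x (hx : x ∈ m), x = ∑ j, β x (f j) • (b j : S) := by
    intro x hx
    have := congrArg Subtype.val (b.sum_repr ⟨x, hx⟩)
    refine this.symm.trans ?_
    rw [AddSubmonoidClass.coe_finsetSum]
    refine Finset.sum_congr rfl fun j _ => ?_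
    have h2 : γ ⟨x, hx⟩ (f j) = b.repr ⟨x, hx⟩ j := by
      conv_lhs => rw [← b.sum_repr ⟨x, hx⟩]
      simp [f, -Module.Basis.sum_repr, LinearMap.BilinForm.apply_dualBasis_right hγ hγs]
    rw [← h2]; rfl
  refine ⟨fun i => b i, fun i => f i, fun i => ?_, ?_⟩
  · have := LinearMap.BilinForm.apply_dualBasis_right hγ hγs b i i
    rw [if_pos rfl] at this
    exact this
  · intro B s
    rw [Finset.sum_add_distrib]
    have h1 : ∀ i, B ⁅s, (b i : S)⁆ (f i) =
        ∑ j, β ⁅s, (b i : S)⁆ (f j) • B (b j) (f i) := by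
      intro i
      conv_lhs => rw [hrepb ⁅s, (b i : S)⁆ (lie_mem_right K S m _ _ (b i).2)]
      simp
    have h2 : ∀ i, B (b i) ⁅s, (f i : S)⁆ =
        ∑ j, β (b j) ⁅s, (f i : S)⁆ • B (b i) (f j) := by
      intro i
      conv_lhs => rw [hrepf ⁅s, (f i : S)⁆ (lie_mem_right K S m _ _ (f i).2)]
      simp
    simp_rw [h1, h2]
    rw [Finset.sum_comm, ← Finset.sum_add_distrib]
    refine Finset.sum_eq_zero fun i _ => ?_
    rw [← Finset.sum_add_distrib]
    refine Finset.sum_eq_zero fun j _ => ?_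
    rw [hinv]
    simp

/-- Contraction with the Casimir element `∑ e i ⊗ f i` of maps `φ : L → ker π` vanishing on the
abelian ideal `ker π` commutes with derivations; here `D` acts on `φ` by `D ∘ φ - φ ∘ D`. -/
theorem casimir_commute {K L S : Type*} [Field K] [LieRing L] [LieAlgebra K L]
    [LieRing S] [LieAlgebra K S] [FiniteDimensional K S] [IsKilling K S]
    (π : L →ₗ⁅K⁆ S) (hπ : Function.Surjective π)
    (hab : ∀ x y : L, π x = 0 → π y = 0 → ⁅x, y⁆ = 0)
    (σ : S →ₗ[K] L) (hσ : ∀ s, π (σ s) = s) {n : ℕ} (e f : Fin n → S)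
    (hcas : ∀ (B : S →ₗ[K] S →ₗ[K] L) (s : S),
      ∑ i, (B ⁅s, e i⁆ (f i) + B (e i) ⁅s, f i⁆) = 0)
    (φ : L →ₗ[K] L) (hφ : ∀ x, π (φ x) = 0) (hφ0 : ∀ r, π r = 0 → φ r = 0)
    (D : LieDerivation K L L) (hD : ∀ x, π x = 0 → π (D x) = 0) :
    D (∑ i, ⁅σ (e i), φ (σ (f i))⁆) =
      ∑ i, ⁅σ (e i), D (φ (σ (f i))) - φ (D (σ (f i)))⁆ := by
  obtain ⟨z, hz⟩ := exists_inner_mod π hπ D hD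
  let B : S →ₗ[K] S →ₗ[K] L := LinearMap.mk₂ K (fun s t => ⁅σ s, φ (σ t)⁆)
      (by intros; simp) (by intros; simp) (by intros; simp) (by intros; simp)
  have h1 : ∀ s t, ⁅D (σ s), φ (σ t)⁆ = B ⁅π z, s⁆ t := by
    intro s t
    have := hab (D (σ s) - σ ⁅π z, s⁆) (φ (σ t)) (by simp [hz, hσ]) (hφ _)
    rw [sub_lie, sub_eq_zero] at this
    exact this
  have h2 : ∀ s t, ⁅σ s, φ (D (σ t))⁆ = B s ⁅π z, t⁆ := by
    intro s t
    have := hφ0 (D (σ t) - σ ⁅π z, t⁆) (by simp [hz, hσ])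
    rw [map_sub, sub_eq_zero] at this
    rw [this]
    rfl
  rw [← sub_eq_zero, map_sum, ← Finset.sum_sub_distrib, ← hcas B (π z)]
  refine Finset.sum_congr rfl fun i _ => ?_
  rw [LieDerivation.apply_lie_eq_add, lie_sub, h1, h2]
  abel

/-- If `ker π` is a minimal stable ideal and `m` meets the image of the annihilator of `ker π` only
in `0`, then the trace form of `ker π` is nondegenerate on `m`. The preimage `J` of the radical of
the form restricted to `m` is an ideal on which the trace form vanishes, so by Cartan's criterion
`⁅J, J⁆` acts nilpotently on `ker π`; its invariants are nonzero and stable, so `⁅J, J⁆` annihilates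
`ker π` and `π J` is an abelian ideal of `S`. -/
theorem traceForm_ker_nondegenerate {ι K L S : Type*} [Field K] [CharZero K] [LieRing L]
    [LieAlgebra K L]
    [LieRing S] [LieAlgebra K S] [FiniteDimensional K L] [FiniteDimensional K S] [IsKilling K S]
    (π : L →ₗ⁅K⁆ S) (hπ : Function.Surjective π) (D : ι → LieDerivation K L L)
    (hD : ∀ i x, π x = 0 → π (D i x) = 0)
    (hab : ∀ x y : L, π x = 0 → π y = 0 → ⁅x, y⁆ = 0)
    (hmin : ∀ W : Submodule K L, (∀ x ∈ W, π x = 0) → (∀ y : L, ∀ x ∈ W, ⁅y, x⁆ ∈ W) →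
      (∀ i, ∀ x ∈ W, D i x ∈ W) → W = ⊥ ∨ ∀ x, π x = 0 → x ∈ W)
    (hne : ∃ r, π r = 0 ∧ r ≠ 0)
    (m : LieIdeal K S) (hm : ∀ x, π x ∈ m → (∀ r, π r = 0 → ⁅x, r⁆ = 0) → π x = 0)
    (x : L) (hx : π x ∈ m)
    (hx0 : ∀ y, π y ∈ m → LieModule.traceForm K L π.ker x y = 0) : π x = 0 := by
  let J : LieIdeal K L :=
    { carrier := {x | π x ∈ m ∧ ∀ y, π y ∈ m → LieModule.traceForm K L π.ker x y = 0}
      add_mem' := by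
        rintro a b ⟨ha, ha'⟩ ⟨hb, hb'⟩
        refine ⟨by rw [map_add]; exact add_mem ha hb, fun y hy => ?_⟩
        simp [ha' y hy, hb' y hy]
      zero_mem' := by simp
      smul_mem' := by
        rintro c a ⟨ha, ha'⟩
        refine ⟨by rw [map_smul]; exact m.smul_mem c ha, fun y hy => ?_⟩
        simp [ha' y hy]
      lie_mem := by
        rintro u a ⟨ha, ha'⟩
        refine ⟨by rw [LieHom.map_lie]; exact lie_mem_right K S m _ _ ha, fun y hy => ?_⟩
        rw [← lie_skew, map_neg, LinearMap.neg_apply, LieModule.traceForm_apply_lie_apply,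
          ha' _ (by rw [LieHom.map_lie]; exact lie_mem_right K S m _ _ hy), neg_zero] }
  have hJ : ∀ x, x ∈ J ↔ π x ∈ m ∧ ∀ y, π y ∈ m → LieModule.traceForm K L π.ker x y = 0 :=
    fun _ => Iff.rfl
  have hRJ : ∀ r, π r = 0 → r ∈ J := by
    intro r hr
    rw [hJ]
    refine ⟨by simp [hr], fun y _ => ?_⟩
    have : LieModule.toEnd K L π.ker r = 0 := by
      ext v
      exact hab r v hr ((LieHom.mem_ker).mp v.2)
    rw [LieModule.traceForm_apply_apply, this]
    simp
  have htr : LieModule.traceForm K J π.ker = 0 := by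
    ext a b
    exact a.2.2 b b.2.1
  have hnil := LieModule.isNilpotent_derivedSeries_of_traceForm_eq_zero htr
  have : Nontrivial π.ker := by
    obtain ⟨r, hr, hr0⟩ := hne
    exact ⟨⟨r, (LieHom.mem_ker).mpr hr⟩, 0, fun h => hr0 (congrArg Subtype.val h)⟩
  have hmax := LieModule.nontrivial_max_triv_of_isNilpotent K (derivedSeries K J 1) π.ker
  obtain ⟨⟨⟨r, hr⟩, hrm⟩, hr0⟩ := exists_ne (0 : LieModule.maxTrivSubmodule K (derivedSeries K J 1) π.ker)
  rw [LieModule.mem_maxTrivSubmodule] at hrm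
  have hrJ : ∀ a ∈ J, ∀ b ∈ J, ⁅⁅a, b⁆, r⁆ = 0 := by
    intro a ha b hb
    have hmem : ⁅(⟨a, ha⟩ : J), (⟨b, hb⟩ : J)⁆ ∈ derivedSeries K J 1 := by
      rw [derivedSeries_def, derivedSeriesOfIdeal_succ, derivedSeriesOfIdeal_zero]
      exact LieSubmodule.lie_mem_lie (LieSubmodule.mem_top _) (LieSubmodule.mem_top _)
    exact congrArg Subtype.val (hrm ⟨_, hmem⟩)
  -- the invariants of `⁅J, J⁆` in `ker π`
  let R0 : Submodule K L :=
    { carrier := {r | π r = 0 ∧ ∀ a ∈ J, ∀ b ∈ J, ⁅⁅a, b⁆, r⁆ = 0}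
      add_mem' := by
        rintro u v ⟨hu, hu'⟩ ⟨hv, hv'⟩
        refine ⟨by simp [hu, hv], fun a ha b hb => ?_⟩
        rw [lie_add, hu' a ha b hb, hv' a ha b hb, add_zero]
      zero_mem' := by simp
      smul_mem' := by
        rintro c u ⟨hu, hu'⟩
        refine ⟨by simp [hu], fun a ha b hb => ?_⟩
        rw [lie_smul, hu' a ha b hb, smul_zero] }
  have hstab : ∀ E : LieDerivation K L L, (∀ x, π x = 0 → π (E x) = 0) →
      ∀ u ∈ R0, E u ∈ R0 := by
    rintro E hE u ⟨hu, hu'⟩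
    have hEJ := ideal_stable π hπ E hE J hRJ
    refine ⟨hE _ hu, fun a ha b hb => ?_⟩
    have h := LieDerivation.apply_lie_eq_add E ⁅a, b⁆ u
    rw [hu' a ha b hb, map_zero, LieDerivation.apply_lie_eq_add, add_lie,
      hu' _ ha _ (hEJ b hb), hu' _ (hEJ a ha) _ hb, add_zero, add_zero] at h
    exact h.symm
  have hR0 : ∀ u, π u = 0 → u ∈ R0 := by
    have had : ∀ y : L, ∀ u ∈ R0, ⁅y, u⁆ ∈ R0 := by
      intro y u hu
      simpa using hstab (LieDerivation.ad K L y) (fun v hv => by simp [hv]) u hu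
    rcases hmin R0 (fun u hu => hu.1) had (fun i => hstab _ (hD i)) with h | h
    · exfalso
      have hmem : r ∈ R0 := ⟨(LieHom.mem_ker).mp hr, hrJ⟩
      rw [h, Submodule.mem_bot] at hmem
      exact hr0 (Subtype.ext (Subtype.ext hmem))
    · exact h
  have hJab : ∀ a ∈ J, ∀ b ∈ J, ⁅π a, π b⁆ = 0 := by
    intro a ha b hb
    rw [← LieHom.map_lie]
    refine hm _ ?_ fun r hr => (hR0 r hr).2 a ha b hb
    rw [LieHom.map_lie]; exact lie_mem_right K S m _ _ hb.1
  have : IsLieAbelian (J.map π) := by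
    refine ⟨?_⟩
    rintro ⟨u, hu⟩ ⟨v, hv⟩
    obtain ⟨⟨a, ha⟩, rfl⟩ := LieIdeal.mem_map_of_surjective hπ hu
    obtain ⟨⟨b, hb⟩, rfl⟩ := LieIdeal.mem_map_of_surjective hπ hv
    exact Subtype.ext (hJab a ha b hb)
  have hbot : J.map π = ⊥ := IsKilling.ideal_eq_bot_of_isLieAbelian _
  have hxm : π x ∈ J.map π := LieIdeal.mem_map (⟨hx, hx0⟩ : x ∈ J)
  rw [hbot] at hxm
  simpa using hxm

/-! ### The case of a minimal kernel -/

/-- If `L` acts nontrivially on the minimal stable abelian ideal `ker π`, there is a Casimir element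
`∑ e i ⊗ f i` of an ideal of `S` whose action on `ker π` is injective. -/
theorem exists_injective_casimir {ι K L S : Type*} [Field K] [CharZero K] [LieRing L]
    [LieAlgebra K L]
    [LieRing S] [LieAlgebra K S] [FiniteDimensional K L] [FiniteDimensional K S] [IsKilling K S]
    (π : L →ₗ⁅K⁆ S) (hπ : Function.Surjective π) (D : ι → LieDerivation K L L)
    (hD : ∀ i x, π x = 0 → π (D i x) = 0)
    (hab : ∀ x y : L, π x = 0 → π y = 0 → ⁅x, y⁆ = 0)
    (hmin : ∀ W : Submodule K L, (∀ x ∈ W, π x = 0) → (∀ y : L, ∀ x ∈ W, ⁅y, x⁆ ∈ W) →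
      (∀ i, ∀ x ∈ W, D i x ∈ W) → W = ⊥ ∨ ∀ x, π x = 0 → x ∈ W)
    (hne : ∃ x r : L, π r = 0 ∧ ⁅x, r⁆ ≠ 0)
    (σ : S →ₗ[K] L) (hσ : ∀ s, π (σ s) = s) :
    ∃ (n : ℕ) (e f : Fin n → S),
      (∀ (B : S →ₗ[K] S →ₗ[K] L) (s : S),
        ∑ i, (B ⁅s, e i⁆ (f i) + B (e i) ⁅s, f i⁆) = 0) ∧
      ∀ r, π r = 0 → ∑ i, ⁅σ (e i), ⁅σ (f i), r⁆⁆ = 0 → r = 0 := by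
  classical
  have hr1 : ∃ r, π r = 0 ∧ r ≠ 0 := by
    obtain ⟨x, r, hr, hxr⟩ := hne
    exact ⟨r, hr, fun h => hxr (by rw [h, lie_zero])⟩
  let N : LieIdeal K L := LieModule.ker K L π.ker
  have hN : ∀ x, x ∈ N ↔ ∀ r, π r = 0 → ⁅x, r⁆ = 0 := by
    intro x
    rw [LieModule.mem_ker]
    constructor
    · intro h r hr
      exact congrArg Subtype.val (h ⟨r, LieHom.mem_ker.mpr hr⟩)
    · rintro h ⟨r, hr⟩
      exact Subtype.ext (h r (LieHom.mem_ker.mp hr))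
  let n : LieIdeal K S := N.map π
  let m : LieIdeal K S := LieIdeal.killingCompl K S n
  have hnm : IsCompl n m := LieIdeal.isCompl_killingCompl n
  have hm : ∀ x, π x ∈ m → (∀ r, π r = 0 → ⁅x, r⁆ = 0) → π x = 0 := by
    intro x hx hx'
    have h1 : π x ∈ n := LieIdeal.mem_map ((hN x).mpr hx')
    have : π x ∈ n ⊓ m := ⟨h1, hx⟩
    rw [hnm.inf_eq_bot] at this
    simpa using this
  have hm0 : m ≠ ⊥ := by
    intro h0
    have hn : n = ⊤ := by
      have := hnm.sup_eq_top
      rwa [h0, sup_bot_eq] at this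
    obtain ⟨x, r, hr, hxr⟩ := hne
    have hx : π x ∈ n := by rw [hn]; exact LieSubmodule.mem_top _
    obtain ⟨⟨y, hy⟩, hyx⟩ := LieIdeal.mem_map_of_surjective hπ hx
    apply hxr
    have h1 := hab (x - y) r (by simpa [sub_eq_zero] using hyx.symm) hr
    rw [sub_lie, (hN y).mp hy r hr, sub_zero] at h1
    exact h1
  -- the trace form of `ker π`, which descends to `S` because `ker π` is abelian
  let β : LinearMap.BilinForm K S :=
    (LieModule.traceForm K L π.ker).compl₁₂ σ σ
  have hβ : ∀ x y, β (π x) (π y) = LieModule.traceForm K L π.ker x y := by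
    have hz : ∀ r y : L, π r = 0 → LieModule.traceForm K L π.ker r y = 0 := by
      intro r y hr
      have : LieModule.toEnd K L π.ker r = 0 := by
        ext v
        exact hab r v hr (LieHom.mem_ker.mp v.2)
      rw [LieModule.traceForm_apply_apply, this]
      simp
    intro x y
    have h1 := hz (σ (π x) - x) (σ (π y)) (by simp [hσ])
    have h2 := hz (σ (π y) - y) x (by simp [hσ])
    rw [map_sub, LinearMap.sub_apply, sub_eq_zero] at h1 h2
    change LieModule.traceForm K L π.ker (σ (π x)) (σ (π y)) = _
    rw [h1, LieModule.traceForm_comm, h2, LieModule.traceForm_comm]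
  obtain ⟨e, f, hef, hcas⟩ := exists_casimir m β
    (fun x y => LieModule.traceForm_comm K L π.ker _ _)
    (by
      intro x y z
      obtain ⟨x, rfl⟩ := hπ x
      obtain ⟨y, rfl⟩ := hπ y
      obtain ⟨z, rfl⟩ := hπ z
      rw [← LieHom.map_lie, ← LieHom.map_lie, hβ, hβ, ← lie_skew, map_neg, LinearMap.neg_apply,
        LieModule.traceForm_apply_lie_apply])
    (by
      intro s hs h
      obtain ⟨x, rfl⟩ := hπ s
      refine traceForm_ker_nondegenerate π hπ D hD hab hmin hr1 m hm x hs fun y hy => ?_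
      rw [← hβ]
      exact h _ hy) L
  refine ⟨_, e, f, hcas, ?_⟩
  let C : L →ₗ[K] L := ∑ i, (LieAlgebra.ad K L (σ (e i))) ∘ₗ (LieAlgebra.ad K L (σ (f i)))
  have hC : ∀ r, C r = ∑ i, ⁅σ (e i), ⁅σ (f i), r⁆⁆ := by
    intro r; simp [C]
  let W : Submodule K L := LinearMap.ker (π : L →ₗ[K] S) ⊓ LinearMap.ker C
  have hW : ∀ r, r ∈ W ↔ π r = 0 ∧ C r = 0 := fun r => Iff.rfl
  have hstab : ∀ E : LieDerivation K L L, (∀ x, π x = 0 → π (E x) = 0) →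
      ∀ u ∈ W, E u ∈ W := by
    intro E hE u hu
    rw [hW] at hu ⊢
    refine ⟨hE u hu.1, ?_⟩
    let φ : L →ₗ[K] L := -(LieAlgebra.ad K L u : L →ₗ[K] L)
    have hφ : ∀ x, φ x = ⁅x, u⁆ := by intro x; simp [φ]
    have := casimir_commute π hπ hab σ hσ e f hcas φ (by intro x; simp [hφ, hu.1])
      (fun r hr => by rw [hφ]; exact hab _ _ hr hu.1) E hE
    simp only [hφ, LieDerivation.apply_lie_eq_add, add_sub_cancel_right] at this
    rw [hC, ← this, ← hC, hu.2, map_zero]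
  have had : ∀ y : L, ∀ u ∈ W, ⁅y, u⁆ ∈ W := by
    intro y u hu
    simpa using hstab (LieDerivation.ad K L y) (fun v hv => by simp [hv]) u hu
  intro r hr hCr
  rcases hmin W (fun u hu => ((hW u).mp hu).1) had (fun i => hstab _ (hD i)) with h | h
  · have : r ∈ W := (hW r).mpr ⟨hr, (hC r).trans hCr⟩
    rw [h] at this
    simpa using this
  · -- if the Casimir operator vanished on `ker π`, its trace `dim m` would be zero
    exfalso
    have h0 : ∑ i, (LieModule.toEnd K L π.ker (σ (e i))) ∘ₗ (LieModule.toEnd K L π.ker (σ (f i)))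
        = 0 := by
      ext v
      have hv := ((hW v).mp (h v (LieHom.mem_ker.mp v.2))).2
      rw [hC] at hv
      simpa using hv
    have h1 := congrArg (LinearMap.trace K π.ker) h0
    rw [map_sum, map_zero] at h1
    have h2 : ∀ i, LinearMap.trace K π.ker ((LieModule.toEnd K L π.ker (σ (e i))) ∘ₗ
        (LieModule.toEnd K L π.ker (σ (f i)))) = 1 := hef
    simp only [h2, Finset.sum_const, Finset.card_univ, Fintype.card_fin, nsmul_eq_mul,
      mul_one, Nat.cast_eq_zero] at h1
    apply hm0
    have : m.toSubmodule = ⊥ := Submodule.finrank_eq_zero.mp h1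
    simpa using this

/-- A stable complement of `ker π` when `ker π` is a minimal stable ideal and there is a projection `p`
onto it commuting with the derivations. It is the kernel of the map `Q` obtained by contracting
`x ↦ ⁅y, p x⁆ - p ⁅y, x⁆` with the Casimir element. -/
theorem levi_of_minimal {ι K L S : Type*} [Field K] [CharZero K] [LieRing L]
    [LieAlgebra K L]
    [LieRing S] [LieAlgebra K S] [FiniteDimensional K L] [FiniteDimensional K S] [IsKilling K S]
    (π : L →ₗ⁅K⁆ S) (hπ : Function.Surjective π) (D : ι → LieDerivation K L L)
    (hD : ∀ i x, π x = 0 → π (D i x) = 0)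
    (hab : ∀ x y : L, π x = 0 → π y = 0 → ⁅x, y⁆ = 0)
    (hmin : ∀ W : Submodule K L, (∀ x ∈ W, π x = 0) → (∀ y : L, ∀ x ∈ W, ⁅y, x⁆ ∈ W) →
      (∀ i, ∀ x ∈ W, D i x ∈ W) → W = ⊥ ∨ ∀ x, π x = 0 → x ∈ W)
    (p : L →ₗ[K] L) (hp : ∀ x, π (p x) = 0) (hpR : ∀ r, π r = 0 → p r = r)
    (hpD : ∀ i x, D i (p x) = p (D i x)) :
    ∃ t : LieSubalgebra K L, (∀ i, ∀ x ∈ t, D i x ∈ t) ∧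
      (∀ x ∈ t, π x = 0 → x = 0) ∧ ∀ s, ∃ x ∈ t, π x = s := by
  by_cases htriv : ∀ x r : L, π r = 0 → ⁅x, r⁆ = 0
  · obtain ⟨t, ht, h⟩ := levi_of_trivial_action π hπ htriv
    exact ⟨t, fun i => ht (D i), h⟩
  push Not at htriv
  obtain ⟨σ, hσ⟩ := exists_linear_section π hπ
  obtain ⟨n, e, f, hcas, hinj⟩ := exists_injective_casimir π hπ D hD hab hmin htriv σ hσ
  let Φ : L →ₗ[K] L →ₗ[K] L := LinearMap.mk₂ K (fun y x => ⁅y, p x⁆ - p ⁅y, x⁆)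
    (by intros; simp; abel) (by intros; simp [smul_sub]) (by intros; simp; abel)
    (by intros; simp [smul_sub])
  have hΦ : ∀ y x, Φ y x = ⁅y, p x⁆ - p ⁅y, x⁆ := fun _ _ => rfl
  have hΦπ : ∀ y x, π (Φ y x) = 0 := by intro y x; simp [hΦ, hp]
  have hΦ0 : ∀ y r, π r = 0 → Φ y r = 0 := by
    intro y r hr
    rw [hΦ, hpR r hr, hpR ⁅y, r⁆ (by simp [hr]), sub_self]
  let Q : L →ₗ[K] L := ∑ i, (LieAlgebra.ad K L (σ (e i)) : L →ₗ[K] L) ∘ₗ Φ.flip (σ (f i))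
  have hQ : ∀ y, Q y = ∑ i, ⁅σ (e i), Φ y (σ (f i))⁆ := by
    intro y; simp [Q]
  have hQπ : ∀ y, π (Q y) = 0 := by
    intro y; rw [hQ, map_sum]; simp [hΦπ]
  have hT : ∀ (E : LieDerivation K L L), (∀ x, π x = 0 → π (E x) = 0) → ∀ y, E (Q y) =
      ∑ i, ⁅σ (e i), E (Φ y (σ (f i))) - Φ y (E (σ (f i)))⁆ := by
    intro E hE y
    rw [hQ]
    exact casimir_commute π hπ hab σ hσ e f hcas (Φ y) (hΦπ y) (hΦ0 y) E hE
  have hQlie : ∀ x y, Q ⁅x, y⁆ = ⁅x, Q y⁆ - ⁅y, Q x⁆ := by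
    intro x y
    have h1 := hT (LieDerivation.ad K L x) (fun v hv => by simp [hv]) y
    have h2 := hT (LieDerivation.ad K L y) (fun v hv => by simp [hv]) x
    rw [LieDerivation.ad_apply_apply] at h1 h2
    rw [h1, h2, hQ, ← Finset.sum_sub_distrib]
    refine Finset.sum_congr rfl fun i _ => ?_
    rw [← lie_sub]
    congr 1
    simp only [LieDerivation.ad_apply_apply, hΦ, lie_lie, map_sub]
    abel
  have hQD : ∀ i y, D i (Q y) = Q (D i y) := by
    intro i y
    rw [hT (D i) (hD i) y, hQ]
    refine Finset.sum_congr rfl fun j _ => ?_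
    congr 1
    simp only [hΦ, map_sub, LieDerivation.apply_lie_eq_add, hpD, map_add]
    abel
  have hQR : ∀ r, π r = 0 → Q r = ∑ i, ⁅σ (e i), ⁅σ (f i), r⁆⁆ := by
    intro r hr
    rw [hQ]
    refine Finset.sum_congr rfl fun j _ => ?_
    rw [hΦ, hab r _ hr (hp _), hpR ⁅r, σ (f j)⁆ (by simp [hr]), zero_sub, lie_skew]
  have hQinj : ∀ r, π r = 0 → Q r = 0 → r = 0 := by
    intro r hr h
    exact hinj r hr ((hQR r hr).symm.trans h)
  refine ⟨{ LinearMap.ker Q with lie_mem' := ?_ }, ?_, ?_, ?_⟩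
  · intro x y hx hy
    change Q x = 0 at hx
    change Q y = 0 at hy
    change Q ⁅x, y⁆ = 0
    rw [hQlie, hx, hy, lie_zero, lie_zero, sub_zero]
  · intro i x hx
    change Q x = 0 at hx
    change Q (D i x) = 0
    rw [← hQD, hx, map_zero]
  · intro x hx h
    exact hQinj x h hx
  · intro s
    let R : Submodule K L := LinearMap.ker (π : L →ₗ[K] S)
    let q : R →ₗ[K] R := Q.restrict (fun x _ => hQπ x)
    have hq : Function.Surjective q := by
      rw [← LinearMap.injective_iff_surjective, injective_iff_map_eq_zero]
      rintro ⟨r, hr⟩ h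
      exact Subtype.ext (hQinj r hr (congrArg Subtype.val h))
    obtain ⟨⟨r, hr⟩, hqr⟩ := hq ⟨Q (σ s), hQπ _⟩
    have hqr' : Q r = Q (σ s) := congrArg Subtype.val hqr
    have hr' : π r = 0 := hr
    refine ⟨σ s - r, ?_, by rw [map_sub, hσ, hr', sub_zero]⟩
    change Q (σ s - r) = 0
    rw [map_sub, hqr', sub_self]

/-! ### Completely reducible families -/

/-- A family of derivations acts completely reducibly: every subspace stable under the family has
a stable complement. -/
def IsCRFamily {ι K L : Type*} [Field K] [LieRing L] [LieAlgebra K L]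
    (D : ι → LieDerivation K L L) : Prop :=
  ∀ W : Submodule K L, (∀ i, ∀ x ∈ W, D i x ∈ W) →
    ∃ W' : Submodule K L, IsCompl W W' ∧ ∀ i, ∀ x ∈ W', D i x ∈ W'

theorem IsCRFamily.of_surjective {ι K L M : Type*} [Field K] [LieRing L] [LieAlgebra K L]
    [LieRing M] [LieAlgebra K M] {D : ι → LieDerivation K L L} (h : IsCRFamily D)
    (ρ : L →ₗ⁅K⁆ M) (hρ : Function.Surjective ρ) (E : ι → LieDerivation K M M)
    (hE : ∀ i x, E i (ρ x) = ρ (D i x)) : IsCRFamily E := by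
  intro W hW
  obtain ⟨W', hc, hW'⟩ := h (W.comap (ρ : L →ₗ[K] M)) (by
    intro i x hx
    change ρ (D i x) ∈ W
    rw [← hE]
    exact hW i _ hx)
  refine ⟨W'.map (ρ : L →ₗ[K] M), ⟨?_, ?_⟩, ?_⟩
  · rw [Submodule.disjoint_def]
    rintro _ hx ⟨w, hw, rfl⟩
    rw [(Submodule.disjoint_def.mp hc.disjoint) w hx hw, map_zero]
  · rw [codisjoint_iff, eq_top_iff]
    rintro y -
    obtain ⟨x, rfl⟩ := hρ y
    have hx : x ∈ W.comap (ρ : L →ₗ[K] M) ⊔ W' := by rw [hc.sup_eq_top]; trivial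
    obtain ⟨a, ha, b, hb, rfl⟩ := Submodule.mem_sup.mp hx
    rw [map_add]
    exact Submodule.add_mem_sup ha ⟨b, hb, rfl⟩
  · rintro i _ ⟨w, hw, rfl⟩
    exact ⟨D i w, hW' i w hw, (hE i w).symm⟩

theorem IsCRFamily.of_injective {ι K L M : Type*} [Field K] [LieRing L] [LieAlgebra K L]
    [LieRing M] [LieAlgebra K M] {D : ι → LieDerivation K L L} (h : IsCRFamily D)
    (j : M →ₗ⁅K⁆ L) (hj : Function.Injective j) (E : ι → LieDerivation K M M)
    (hE : ∀ i x, j (E i x) = D i (j x)) : IsCRFamily E := by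
  intro W hW
  obtain ⟨W', hc, hW'⟩ := h (W.map (j : M →ₗ[K] L)) (by
    rintro i _ ⟨w, hw, rfl⟩
    exact ⟨E i w, hW i w hw, hE i w⟩)
  refine ⟨W'.comap (j : M →ₗ[K] L), ⟨?_, ?_⟩, ?_⟩
  · rw [Submodule.disjoint_def]
    intro x hx hx'
    have := (Submodule.disjoint_def.mp hc.disjoint) (j x) ⟨x, hx, rfl⟩ hx'
    exact hj (by rw [this, map_zero])
  · rw [codisjoint_iff, eq_top_iff]
    rintro y -
    have hx : j y ∈ W.map (j : M →ₗ[K] L) ⊔ W' := by rw [hc.sup_eq_top]; trivial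
    obtain ⟨_, ⟨a, ha, rfl⟩, b, hb, hab⟩ := Submodule.mem_sup.mp hx
    have hb' : y - a ∈ W'.comap (j : M →ₗ[K] L) := by
      change j (y - a) ∈ W'
      have : j (y - a) = b := by
        rw [map_sub, ← hab]
        exact add_sub_cancel_left _ _
      rwa [this]
    simpa using Submodule.add_mem_sup ha hb'
  · intro i x hx
    change j (E i x) ∈ W'
    rw [hE]
    exact hW' i _ hx

/-- Solvability of the kernel passes along a homomorphism over `S` in the surjective direction to
the target and in the injective direction to the source. -/
theorem isSolvable_ker_of_hom {K L M S : Type*} [Field K] [LieRing L] [LieAlgebra K L]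
    [LieRing M] [LieAlgebra K M] [LieRing S] [LieAlgebra K S]
    (ρ : L →ₗ⁅K⁆ M) (π : L →ₗ⁅K⁆ S) (π' : M →ₗ⁅K⁆ S)
    (h : ∀ x, π' (ρ x) = π x) :
    (Function.Surjective ρ → IsSolvable π.ker → IsSolvable π'.ker) ∧
    (Function.Injective ρ → IsSolvable π'.ker → IsSolvable π.ker) := by
  let g : π.ker →ₗ⁅K⁆ π'.ker :=
    { toFun := fun x => ⟨ρ x, LieHom.mem_ker.mpr ((h x).trans (LieHom.mem_ker.mp x.2))⟩
      map_add' := fun x y => Subtype.ext (map_add ρ _ _)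
      map_smul' := fun c x => Subtype.ext (map_smul ρ _ _)
      map_lie' := fun {x y} => Subtype.ext (LieHom.map_lie ρ _ _) }
  constructor
  · intro hρ hs
    refine Function.Surjective.lieAlgebra_isSolvable (f := g) ?_
    rintro ⟨y, hy⟩
    obtain ⟨x, rfl⟩ := hρ y
    exact ⟨⟨x, LieHom.mem_ker.mpr ((h x).symm.trans (LieHom.mem_ker.mp hy))⟩, rfl⟩
  · intro hρ hs
    refine Function.Injective.lieAlgebra_isSolvable (f := g) ?_
    intro x y hxy
    exact Subtype.ext (hρ (congrArg Subtype.val hxy))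

/-! ### Induction on the dimension -/

theorem ker_abelian_of_minimal {ι K L S : Type*} [Field K] [LieRing L] [LieAlgebra K L]
    [LieRing S] [LieAlgebra K S]
    (π : L →ₗ⁅K⁆ S) (hsol : IsSolvable π.ker) (D : ι → LieDerivation K L L)
    (hD : ∀ i x, π x = 0 → π (D i x) = 0)
    (hmin : ∀ W : Submodule K L, (∀ x ∈ W, π x = 0) → (∀ y : L, ∀ x ∈ W, ⁅y, x⁆ ∈ W) →
      (∀ i, ∀ x ∈ W, D i x ∈ W) → W = ⊥ ∨ ∀ x, π x = 0 → x ∈ W) :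
    ∀ x y : L, π x = 0 → π y = 0 → ⁅x, y⁆ = 0 := by
  let W : Submodule K L := Submodule.span K {z | ∃ x y : L, π x = 0 ∧ π y = 0 ∧ ⁅x, y⁆ = z}
  have hW : ∀ x y, π x = 0 → π y = 0 → ⁅x, y⁆ ∈ W :=
    fun x y hx hy => Submodule.subset_span ⟨x, y, hx, hy, rfl⟩
  have hstab : ∀ E : LieDerivation K L L, (∀ x, π x = 0 → π (E x) = 0) →
      ∀ u ∈ W, E u ∈ W := by
    intro E hE u hu
    induction hu using Submodule.span_induction with
    | mem x h =>
      obtain ⟨a, b, ha, hb, rfl⟩ := h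
      rw [LieDerivation.apply_lie_eq_add]
      exact add_mem (hW _ _ ha (hE b hb)) (hW _ _ (hE a ha) hb)
    | zero => simp
    | add x y _ _ hx hy => rw [map_add]; exact add_mem hx hy
    | smul c x _ hx => rw [map_smul]; exact W.smul_mem _ hx
  have had : ∀ y : L, ∀ u ∈ W, ⁅y, u⁆ ∈ W := by
    intro y u hu
    simpa using hstab (LieDerivation.ad K L y) (fun v hv => by simp [hv]) u hu
  have hWR : W ≤ π.ker.toSubmodule := by
    rw [Submodule.span_le]
    rintro _ ⟨x, y, hx, hy, rfl⟩
    exact LieHom.mem_ker.mpr (by rw [LieHom.map_lie, hx, zero_lie])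
  have hWR' : W ≤ (⁅π.ker, π.ker⁆ : LieIdeal K L).toSubmodule := by
    rw [Submodule.span_le]
    rintro _ ⟨x, y, hx, hy, rfl⟩
    exact LieSubmodule.lie_mem_lie (LieHom.mem_ker.mpr hx) (LieHom.mem_ker.mpr hy)
  intro x y hx hy
  rcases hmin W (fun u hu => LieHom.mem_ker.mp (hWR hu)) had (fun i => hstab _ (hD i)) with h | h
  · have := hW x y hx hy
    rw [h] at this
    simpa using this
  · have hRR : ⁅π.ker, π.ker⁆ = π.ker := by
      refine le_antisymm (LieSubmodule.lie_le_right _ _) fun u hu => ?_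
      exact hWR' (h u (LieHom.mem_ker.mp hu))
    obtain ⟨k, hk⟩ := IsSolvable.solvable K π.ker
    rw [LieIdeal.derivedSeries_eq_bot_iff] at hk
    have hall : ∀ k, derivedSeriesOfIdeal K L k π.ker = π.ker := by
      intro k
      induction k with
      | zero => rfl
      | succ k ih => rw [derivedSeriesOfIdeal_succ, ih, hRR]
    rw [hall] at hk
    have : x ∈ π.ker := LieHom.mem_ker.mpr hx
    rw [hk] at this
    have : x = 0 := by simpa using this
    rw [this, zero_lie]

/-- Existence of a stable complement to the solvable kernel of a surjection onto `S`, by induction on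
the dimension `n` of `L`. -/
theorem levi_family {ι K S : Type*} [Field K] [CharZero K]
    [LieRing S] [LieAlgebra K S] [FiniteDimensional K S] [IsKilling K S] (n : ℕ) :
    ∀ (L : Type*) [LieRing L] [LieAlgebra K L] [FiniteDimensional K L]
    (_ : Module.finrank K L = n)
    (π : L →ₗ⁅K⁆ S) (_ : Function.Surjective π) (_ : IsSolvable π.ker)
    (D : ι → LieDerivation K L L)
    (_ : ∀ i x, π x = 0 → π (D i x) = 0) (_ : IsCRFamily D),
    ∃ t : LieSubalgebra K L, (∀ i, ∀ x ∈ t, D i x ∈ t) ∧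
      (∀ x ∈ t, π x = 0 → x = 0) ∧ ∀ s, ∃ x ∈ t, π x = s := by
  induction n using Nat.strong_induction_on with
  | _ n ih =>
  intro L _ _ _ hn π hπ hsol D hD hcr
  by_cases hmin : ∀ W : Submodule K L, (∀ x ∈ W, π x = 0) → (∀ y : L, ∀ x ∈ W, ⁅y, x⁆ ∈ W) →
      (∀ i, ∀ x ∈ W, D i x ∈ W) → W = ⊥ ∨ ∀ x, π x = 0 → x ∈ W
  · obtain ⟨V, hV, hVD⟩ := hcr (LinearMap.ker (π : L →ₗ[K] S)) hD
    refine levi_of_minimal π hπ D hD (ker_abelian_of_minimal π hsol D hD hmin) hmin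
      (Submodule.projection _ V hV) (fun x => Submodule.projection_apply_mem hV x)
      (fun r hr => Submodule.projection_apply_of_mem_left hV hr) ?_
    intro i x
    have hx : x ∈ LinearMap.ker (π : L →ₗ[K] S) ⊔ V := by rw [hV.sup_eq_top]; trivial
    obtain ⟨a, ha, b, hb, rfl⟩ := Submodule.mem_sup.mp hx
    simp only [map_add]
    rw [Submodule.projection_apply_of_mem_left hV ha,
      Submodule.projection_apply_of_mem_left hV (hD i a ha),
      (Submodule.projection_apply_eq_zero_iff hV).mpr hb,
      (Submodule.projection_apply_eq_zero_iff hV).mpr (hVD i b hb), map_zero]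
  · push Not at hmin
    obtain ⟨W, hWR, hWad, hWD, hW0, x₀, hx₀, hx₀W⟩ := hmin
    let I : LieIdeal K L := { W with lie_mem := fun {y x} hx => hWad y x hx }
    have hI : ∀ x, x ∈ I ↔ x ∈ W := fun _ => Iff.rfl
    obtain ⟨ρ, hρ, hρ0⟩ := exists_quotient_hom I
    choose E hE using fun i => exists_derivation_quotient ρ hρ (D i)
      (fun x hx => (hρ0 _).mpr (hWD i x ((hρ0 _).mp hx)))
    obtain ⟨π', hπ'⟩ := exists_hom_quotient ρ hρ π (fun x hx => hWR x ((hρ0 x).mp hx))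
    have hfd : FiniteDimensional K (L ⧸ I) := inferInstanceAs (FiniteDimensional K (L ⧸ W))
    have hlt : Module.finrank K (L ⧸ I) < n := by
      have h1 : Module.finrank K (L ⧸ W) + Module.finrank K W = Module.finrank K L :=
        Submodule.finrank_quotient_add_finrank W
      have h2 : Module.finrank K W ≠ 0 := fun h => hW0 (Submodule.finrank_eq_zero.mp h)
      change Module.finrank K (L ⧸ W) < n
      omega
    obtain ⟨t', ht'D, ht'0, ht's⟩ := ih _ hlt (L ⧸ I) rfl π'
      (fun s => by obtain ⟨x, rfl⟩ := hπ s; exact ⟨ρ x, hπ' x⟩)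
      ((isSolvable_ker_of_hom ρ π π' hπ').1 hρ hsol) E
      (fun i y hy => by
        obtain ⟨x, rfl⟩ := hρ y
        rw [hE, hπ']
        rw [hπ'] at hy
        exact hD i x hy)
      (hcr.of_surjective ρ hρ E hE)
    let T : LieSubalgebra K L := t'.comap ρ
    have hT : ∀ x, x ∈ T ↔ ρ x ∈ t' := fun _ => Iff.rfl
    have hTD : ∀ i, ∀ x ∈ T, D i x ∈ T := by
      intro i x hx
      rw [hT] at hx ⊢
      rw [← hE]
      exact ht'D i _ hx
    let F : ι → LieDerivation K T T := fun i =>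
      { toLinearMap := (D i : L →ₗ[K] L).restrict (p := T.toSubmodule) (q := T.toSubmodule) (hTD i)
        leibniz' := by
          intro a b
          exact Subtype.ext (LieDerivation.apply_lie_eq_sub (D i) (a : L) (b : L)) }
    have hF : ∀ i x, T.incl (F i x) = D i (T.incl x) := fun i x => rfl
    have hTlt : Module.finrank K T < n := by
      rw [← hn]
      refine Submodule.finrank_lt (s := T.toSubmodule) fun h => ?_
      have hx : x₀ ∈ T := by
        change x₀ ∈ T.toSubmodule
        rw [h]; trivial
      exact hx₀W ((hρ0 x₀).mp (ht'0 _ hx ((hπ' x₀).trans hx₀)))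
    obtain ⟨t, htD, ht0, hts⟩ := ih _ hTlt T rfl (π.comp T.incl)
      (fun s => by
        obtain ⟨y, hy, hys⟩ := ht's s
        obtain ⟨x, rfl⟩ := hρ y
        exact ⟨⟨x, hy⟩, (hπ' x).symm.trans hys⟩)
      ((isSolvable_ker_of_hom T.incl (π.comp T.incl) π (fun _ => rfl)).2
        (Subtype.val_injective) hsol) F
      (fun i x hx => hD i x hx)
      (hcr.of_injective T.incl (Subtype.val_injective) F hF)
    refine ⟨t.map T.incl, ?_, ?_, ?_⟩
    · rintro i _ ⟨x, hx, rfl⟩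
      exact ⟨F i x, htD i x hx, rfl⟩
    · rintro _ ⟨x, hx, rfl⟩ h
      exact congrArg Subtype.val (ht0 x hx h)
    · intro s
      obtain ⟨x, hx, rfl⟩ := hts s
      exact ⟨T.incl x, ⟨x, hx, rfl⟩, rfl⟩

theorem stmt2 [FiniteDimensional K L]
    (Γ : LieSubalgebra K (LieDerivation K L L))
    (hΓ : IsCompletelyReducible K L ↑Γ) :
    ∃ s : LieSubalgebra K L, IsLeviSubalgebra K L s ∧
      ∀ α ∈ Γ, ∀ x ∈ s, α x ∈ s := by
  obtain ⟨π, hπ, hπ0⟩ := exists_quotient_hom (radical K L)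
  have hfd : FiniteDimensional K (L ⧸ radical K L) :=
    inferInstanceAs (FiniteDimensional K (L ⧸ (radical K L).toSubmodule))
  have htr : HasTrivialRadical K (L ⧸ radical K L) := hasTrivialRadical_quotient
  have hkill : IsKilling K (L ⧸ radical K L) := inferInstance
  have hker : π.ker = radical K L := by
    ext x
    rw [LieHom.mem_ker, hπ0]
  have hsol : IsSolvable π.ker := by
    rw [hker]
    infer_instance
  have hcr : IsCRFamily (fun α : Γ => (α : LieDerivation K L L)) := by
    intro W hW
    obtain ⟨W', hc, hW'⟩ := hΓ W fun α hα => hW ⟨α, hα⟩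
    exact ⟨W', hc, fun α => hW' α α.2⟩
  obtain ⟨t, htD, ht0, hts⟩ := levi_family _ L rfl π hπ hsol
    (fun α : Γ => (α : LieDerivation K L L)) (fun α => ker_stable_of_isSolvable π hπ hsol α) hcr
  refine ⟨t, ⟨?_, ?_, ?_⟩, fun α hα => htD ⟨α, hα⟩⟩
  · have hbij : Function.Bijective (π.comp t.incl) := by
      constructor
      · rw [injective_iff_map_eq_zero]
        intro x hx
        exact Subtype.ext (ht0 x x.2 hx)
      · intro s
        obtain ⟨x, hx, rfl⟩ := hts s
        exact ⟨⟨x, hx⟩, rfl⟩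
    have : IsKilling K t := isKilling_of_equiv (LieEquiv.ofBijective _ hbij).symm
    infer_instance
  · rw [Submodule.disjoint_def]
    intro x hx hx'
    exact ht0 x hx ((hπ0 x).mpr hx')
  · rw [codisjoint_iff, eq_top_iff]
    rintro x -
    obtain ⟨y, hy, hyx⟩ := hts (π x)
    have hxy : x - y ∈ radical K L := by
      rw [← hπ0, map_sub, hyx, sub_self]
    refine Submodule.mem_sup.mpr ⟨y, hy, x - y, hxy, ?_⟩
    abel
end

section
/- Let g be a finite-dimensional Lie algebra over a field K of characteristic 0 with Z(g) = 0 and let ĝ be the complete Lie algebra at which the derivation tower of g terminates. Then dim ĝ ≤ dim Der(C^∞(g)) + dim Z(C^∞(g)). -/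
/-!
Write `N = C^∞(g)` and let `G` be any term of the derivation tower, with `f : g → G` the composite
of the maps `ad`. By induction along the tower, `g` sits in `G` subnormally with trivial centralizer
and `N` is an ideal of `G` (`TowerEmbedding.ad`); the last point rests on `N = [g, N]` and on the
fact that iterated brackets of `G` with `g` eventually land in `N`.

Hence `G` acts on `N` by derivations, the kernel of `G → Der N` being the centralizer `C` of `N`
in `G`, and everything reduces to `C ⊆ N`, since then `C = Z(N)`. Now `g` acts on `C` through the
nilpotent algebra `g / N`, so `C` is the direct sum of its Fitting components `C₀` and `C₁`.
If `C₀ ≠ 0`, Engel's theorem produces a nonzero element of `C₀` centralized by `g`, which is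
impossible. So `C = C₁ = [g, [g, … [g, C]]]`, which lies in `N`
(`TowerEmbedding.centralizer_le`).
-/

/-!
STATEMENT 13: Let `g` be a finite-dimensional Lie algebra over a field `K` of
characteristic 0 with `Z(g) = 0` and let `ĝ` be the complete Lie algebra at which the
derivation tower of `g` terminates.  Then `dim ĝ ≤ dim Der(C^∞(g)) + dim Z(C^∞(g))`.
-/

universe u v

/-- A Lie algebra bundled with its structure, used to build the derivation tower. -/
structure LieAlgBundle (K : Type u) [Field K] : Type (max u (v + 1)) where
  carrier : Type v
  [lieRing : LieRing carrier]
  [lieAlgebra : LieAlgebra K carrier]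

attribute [instance] LieAlgBundle.lieRing LieAlgBundle.lieAlgebra

variable (K : Type u) [Field K] [CharZero K]

/-- Iterating the passage to the Lie algebra of derivations. -/
def towerAux (A : LieAlgBundle.{u, v} K) : ℕ → LieAlgBundle.{u, v} K
  | 0 => A
  | n + 1 => ⟨LieDerivation K (towerAux A n).carrier (towerAux A n).carrier⟩

variable (L : Type v) [LieRing L] [LieAlgebra K L]

/-- The derivation tower of `L`: `Tower 0 = L`, `Tower (n+1) = Der (Tower n)`. -/
def Tower (n : ℕ) : Type v := (towerAux K ⟨L⟩ n).carrier

noncomputable instance (n : ℕ) : LieRing (Tower K L n) := (towerAux K ⟨L⟩ n).lieRing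

noncomputable instance (n : ℕ) : LieAlgebra K (Tower K L n) := (towerAux K ⟨L⟩ n).lieAlgebra

/-- A Lie algebra is complete if its center is trivial and every derivation is inner. -/
def IsCompleteLieAlgebra (R A : Type*) [CommRing R] [LieRing A] [LieAlgebra R A] : Prop :=
  LieAlgebra.center R A = ⊥ ∧
    ∀ d : LieDerivation R A A, ∃ x : A, ∀ y : A, d y = ⁅x, y⁆

/-- The data carried along the derivation tower for a Lie algebra homomorphism `f : g → G` and an
ideal `N` of `g` (to be thought of as `C^∞(g)`): `f` embeds `g` subnormally with trivial
centralizer, and `f(N)` is an ideal of `G`. Subnormality is recorded as a filtration of `G`, starting at `G` and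
ending inside `f(N)`, each step of which absorbs the bracket of the preceding one with `f(g)`. -/
structure TowerEmbedding {F g G : Type*} [Field F] [LieRing g] [LieAlgebra F g]
    [LieRing G] [LieAlgebra F G] (N : LieIdeal F g) (f : g →ₗ⁅F⁆ G) : Prop where
  inj : Function.Injective f
  filtration : ∃ (U : ℕ → Submodule F G) (m : ℕ), U 0 = ⊤ ∧
    (∀ (k : ℕ) (x : g), ∀ y ∈ U k, ⁅f x, y⁆ ∈ U (k + 1)) ∧ U m ≤ N.toSubmodule.map (f : g →ₗ[F] G)
  ideal : ∀ y : G, ∀ x ∈ N, ∃ x' ∈ N, f x' = ⁅y, f x⁆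
  centralizer : ∀ y : G, (∀ x : g, ⁅f x, y⁆ = 0) → y = 0

namespace TowerEmbedding

variable {F g G : Type*} [Field F] [LieRing g] [LieAlgebra F g] [LieRing G] [LieAlgebra F G]
  {N : LieIdeal F g} {f : g →ₗ⁅F⁆ G}

theorem center_eq_bot (h : TowerEmbedding N f) : LieAlgebra.center F G = ⊥ := by
  refine (LieSubmodule.eq_bot_iff _).mpr fun y hy => h.centralizer y fun x => ?_
  exact (LieModule.mem_maxTrivSubmodule F G G y).mp hy (f x)

/-- The ideal `N`, being equal to `[g, N]`, is stable under all derivations of `G`. -/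
theorem derivation_mem (h : TowerEmbedding N f) (hN : N ≤ ⁅(⊤ : LieIdeal F g), N⁆)
    (D : LieDerivation F G G) (x : g) (hx : x ∈ N) : ∃ x' ∈ N, f x' = D (f x) := by
  obtain ⟨U, m, hU0, hU, hUm⟩ := h.filtration
  -- Rewriting `x` as a sum of brackets moves `D (f x)` one step down the filtration, modulo `f(N)`.
  have key : ∀ k, ∀ x ∈ N, D (f x) ∈ U k ⊔ N.toSubmodule.map (f : g →ₗ[F] G) := by
    intro k
    induction k with
    | zero => intro x _; simp [hU0]
    | succ k ih =>
      intro x hx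
      have hx' := hN hx
      rw [← LieSubmodule.mem_toSubmodule, LieSubmodule.lieIdeal_oper_eq_linear_span'] at hx'
      induction hx' using Submodule.span_induction with
      | mem z hz =>
        obtain ⟨a, -, n, hn, rfl⟩ := hz
        rw [LieHom.map_lie, LieDerivation.apply_lie_eq_add]
        refine add_mem ?_ ?_
        · obtain ⟨u, hu, v, hv, huv⟩ := Submodule.mem_sup.mp (ih n hn)
          obtain ⟨n', hn', rfl⟩ := hv
          rw [← huv, lie_add]
          refine Submodule.add_mem_sup (hU k a u hu) ⟨⁅a, n'⁆, lie_mem_right F g N a n' hn', ?_⟩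
          simp
        · obtain ⟨n', hn', heq⟩ := h.ideal (D (f a)) n hn
          exact Submodule.mem_sup_right ⟨n', hn', heq⟩
      | zero => simp
      | add a b ha hb iha ihb =>
        have hN' : ∀ c ∈ Submodule.span F {x | ∃ y ∈ (⊤ : LieIdeal F g), ∃ n ∈ N, ⁅y, n⁆ = x},
            c ∈ N := by
          intro c hc
          rw [← LieSubmodule.lieIdeal_oper_eq_linear_span'] at hc
          exact LieSubmodule.lie_le_right N ⊤ hc
        rw [map_add, map_add]
        exact add_mem (iha (hN' a ha)) (ihb (hN' b hb))
      | smul c a ha iha =>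
        have hN' : a ∈ N := by
          rw [← LieSubmodule.lieIdeal_oper_eq_linear_span'] at ha
          exact LieSubmodule.lie_le_right N ⊤ ha
        rw [map_smul, map_smul]
        exact Submodule.smul_mem _ _ (iha hN')
  have := key m x hx
  rw [sup_eq_right.mpr hUm] at this
  obtain ⟨z, hz, heq⟩ := this
  exact ⟨z, hz, heq⟩

/-- A derivation of `G` vanishing on `f(g)` is zero: it vanishes on the last step of the filtration
of `G`, and then on each preceding one because `f(g)` has trivial centralizer. -/
theorem derivation_eq_zero (h : TowerEmbedding N f) (D : LieDerivation F G G)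
    (hD : ∀ x, D (f x) = 0) : D = 0 := by
  obtain ⟨U, m, hU0, hU, hUm⟩ := h.filtration
  have key : ∀ j k, k + j = m → ∀ y ∈ U k, D y = 0 := by
    intro j
    induction j with
    | zero =>
      rintro k rfl y hy
      obtain ⟨x, -, rfl⟩ := hUm hy
      exact hD x
    | succ j ih =>
      intro k hk y hy
      refine h.centralizer _ fun x => ?_
      have h1 := ih (k + 1) (by omega) _ (hU k x y hy)
      rwa [LieDerivation.apply_lie_eq_add, hD, zero_lie, add_zero] at h1
  ext y
  exact key m 0 (by omega) y (by simp [hU0])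

/-- One step up the derivation tower. -/
theorem ad (h : TowerEmbedding N f) (hN : N ≤ ⁅(⊤ : LieIdeal F g), N⁆) :
    TowerEmbedding N ((LieDerivation.ad F G).comp f) where
  inj := (LieDerivation.injective_ad_of_center_eq_bot h.center_eq_bot).comp h.inj
  filtration := by
    obtain ⟨U, m, hU0, hU, hUm⟩ := h.filtration
    refine ⟨fun k => Nat.casesOn k ⊤
      fun k => (U k).map (LieDerivation.ad F G : G →ₗ[F] LieDerivation F G G), m + 1, rfl, ?_, ?_⟩
    · rintro (_ | k) x y hy
      · refine ⟨-(y (f x)), by simp [hU0], ?_⟩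
        rw [map_neg]
        change -(LieDerivation.ad F G (y (f x))) = ⁅LieDerivation.ad F G (f x), y⁆
        rw [← LieDerivation.lie_der_ad_eq_ad_der, lie_skew]
      · obtain ⟨z, hz, rfl⟩ := hy
        exact ⟨⁅f x, z⁆, hU k x z hz, LieHom.map_lie _ _ _⟩
    · rintro _ ⟨z, hz, rfl⟩
      obtain ⟨x, hx, rfl⟩ := hUm hz
      exact ⟨x, hx, rfl⟩
  ideal := by
    intro D x hx
    obtain ⟨x', hx', heq⟩ := h.derivation_mem hN D x hx
    refine ⟨x', hx', ?_⟩
    rw [LieHom.comp_apply, LieHom.comp_apply, LieDerivation.lie_der_ad_eq_ad_der, heq]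
  centralizer := by
    intro D hD
    refine h.derivation_eq_zero D fun x => ?_
    apply LieDerivation.injective_ad_of_center_eq_bot h.center_eq_bot
    rw [map_zero, ← LieDerivation.lie_der_ad_eq_ad_der, ← lie_skew, ← LieHom.comp_apply, hD,
      neg_zero]

/-- The centralizer of `f(N)` in `G`, an ideal because `f(N)` is one. -/
def centralizerIdeal (h : TowerEmbedding N f) : LieIdeal F G where
  carrier := {y | ∀ x ∈ N, ⁅y, f x⁆ = 0}
  add_mem' := by
    intro a b ha hb x hx
    rw [add_lie, ha x hx, hb x hx, add_zero]
  zero_mem' := by simp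
  smul_mem' := by
    intro c a ha x hx
    rw [smul_lie, ha x hx, smul_zero]
  lie_mem := by
    intro z y hy x hx
    obtain ⟨x', hx', heq⟩ := h.ideal z x hx
    rw [lie_lie, hy x hx, ← heq, hy x' hx', lie_zero, sub_zero]

section

attribute [local instance] LieRing.ofAssociativeRing

/-- The centralizer of `f(N)` is contained in `f(N)` when `g / N` is nilpotent: its Fitting null
component under `g` vanishes by Engel's theorem, and the other one lies in `f(N)`. -/
theorem centralizer_le [FiniteDimensional F G] (h : TowerEmbedding N f)
    (hN : ∃ k, LieModule.lowerCentralSeries F g g k ≤ N) :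
    h.centralizerIdeal.toSubmodule ≤ N.toSubmodule.map (f : g →ₗ[F] G) := by
  obtain ⟨U, m, hU0, hU, hUm⟩ := h.filtration
  set C := h.centralizerIdeal
  -- `H` is the image of `g` in `End C`; it is a quotient of the nilpotent algebra `g / N`.
  let φ : g →ₗ⁅F⁆ Module.End F C := (LieModule.toEnd F G C).comp f
  let H := φ.range
  have hφ : ∀ x (y : C), ((φ x y : C) : G) = ⁅f x, (y : G)⁆ := fun x y => rfl
  have hφN : ∀ x ∈ N, φ x = 0 := by
    intro x hx
    ext y
    rw [hφ, ← lie_skew, y.2 x hx]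
    simp
  have : LieRing.IsNilpotent H := by
    obtain ⟨k, hk⟩ := hN
    refine LieModule.IsNilpotent.mk (R := F) (k := k) H ?_
    rw [← LieIdeal.lowerCentralSeries_map_eq k φ.surjective_rangeRestrict, LieIdeal.map_eq_bot_iff]
    intro x hx
    rw [LieHom.mem_ker]
    exact Subtype.ext (hφN x (hk hx))
  have hcompl := LieModule.isCompl_genWeightSpace_zero_posFittingComp F H C
  have h0 : LieModule.genWeightSpace C (0 : H → F) = ⊥ := by
    by_contra hne
    have := (LieSubmodule.nontrivial_iff_ne_bot F H C).mpr hne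
    have := LieModule.nontrivial_max_triv_of_isNilpotent F H
      (LieModule.genWeightSpace C (0 : H → F))
    obtain ⟨y, hy⟩ := exists_ne
      (0 : LieModule.maxTrivSubmodule F H (LieModule.genWeightSpace C (0 : H → F)))
    apply hy
    have h1 : (((y : LieModule.genWeightSpace C (0 : H → F)) : C) : G) = 0 := by
      refine h.centralizer _ fun x => ?_
      have h2 := y.2 ⟨φ x, ⟨x, rfl⟩⟩
      rw [← hφ]
      exact congrArg (fun z : LieModule.genWeightSpace C (0 : H → F) => ((z : C) : G)) h2
    exact Subtype.ext (Subtype.ext (Subtype.ext h1))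
  rw [h0] at hcompl
  have h1 := eq_top_of_bot_isCompl hcompl
  have hlcs : ∀ k, ∀ y ∈ LieModule.lowerCentralSeries F H C k, (y : G) ∈ U k := by
    intro k
    induction k with
    | zero => intro y _; simp [hU0]
    | succ k ih =>
      intro y hy
      rw [LieModule.lowerCentralSeries_succ, ← LieSubmodule.mem_toSubmodule,
        LieSubmodule.lieIdeal_oper_eq_linear_span'] at hy
      induction hy using Submodule.span_induction with
      | mem z hz =>
        obtain ⟨⟨_, x, rfl⟩, -, n, hn, rfl⟩ := hz
        exact hU k x n (ih n hn)
      | zero => simp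
      | add a b _ _ ha hb => exact add_mem ha hb
      | smul c a _ ha => exact Submodule.smul_mem _ c ha
  intro y hy
  apply hUm
  refine hlcs m ⟨y, hy⟩ (?_ : (⟨y, hy⟩ : C) ∈ _)
  have h2 := LieModule.posFittingComp_le_iInf_lowerCentralSeries F H C
  rw [h1] at h2
  exact iInf_le (fun k => LieModule.lowerCentralSeries F H C k) m (h2 (LieSubmodule.mem_top _))

end

/-- The action of `y : G` on the ideal `f(N)`, transported to `N`. -/
noncomputable def restrictDer (h : TowerEmbedding N f) : G →ₗ[F] LieDerivation F N N :=
  have ex : ∀ (y : G) (x : N), ∃ x' : N, f x' = ⁅y, f x⁆ := fun y x =>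
    let ⟨x', hx', heq⟩ := h.ideal y x x.2
    ⟨⟨x', hx'⟩, heq⟩
  have hs : ∀ (y : G) (x : N), f ((ex y x).choose : g) = ⁅y, f x⁆ :=
    fun y x => (ex y x).choose_spec
  { toFun := fun y =>
      { toFun := fun x => (ex y x).choose
        map_add' := fun a b => Subtype.ext (h.inj (by
          rw [hs, LieSubmodule.coe_add, LieSubmodule.coe_add, map_add, map_add, hs, hs, lie_add]))
        map_smul' := fun c a => Subtype.ext (h.inj (by
          rw [hs, RingHom.id_apply, LieSubmodule.coe_smul, LieSubmodule.coe_smul, map_smul,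
            map_smul, hs, lie_smul]))
        leibniz' := fun a b => Subtype.ext (h.inj (by
          change f ((ex y ⁅a, b⁆).choose : g) =
            f (⁅(a : g), ((ex y b).choose : g)⁆ - ⁅(b : g), ((ex y a).choose : g)⁆)
          have hab : ((⁅a, b⁆ : N) : g) = ⁅(a : g), (b : g)⁆ := rfl
          rw [hs, map_sub, LieHom.map_lie, LieHom.map_lie, hs, hs, hab, LieHom.map_lie,
            leibniz_lie, ← lie_skew (f b), sub_neg_eq_add, add_comm])) }
    map_add' := fun y z => LieDerivation.ext fun x => Subtype.ext (h.inj (by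
      change f ((ex (y + z) x).choose : g) = f (((ex y x).choose : g) + ((ex z x).choose : g))
      rw [hs, map_add, hs, hs, add_lie]))
    map_smul' := fun c y => LieDerivation.ext fun x => Subtype.ext (h.inj (by
      change f ((ex (c • y) x).choose : g) = f (c • ((ex y x).choose : g))
      rw [hs, map_smul, hs, smul_lie])) }

theorem restrictDer_apply (h : TowerEmbedding N f) (y : G) (x : N) :
    f (h.restrictDer y x : g) = ⁅y, f x⁆ :=
  let ⟨x', hx', heq⟩ := h.ideal y x x.2
  (⟨⟨x', hx'⟩, heq⟩ : ∃ x' : N, f x' = ⁅y, f x⁆).choose_spec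

theorem finrank_le [FiniteDimensional F g] [FiniteDimensional F G] (h : TowerEmbedding N f)
    (hN : ∃ k, LieModule.lowerCentralSeries F g g k ≤ N) :
    Module.finrank F G ≤ Module.finrank F (LieDerivation F N N) +
      Module.finrank F (LieAlgebra.center F N) := by
  rw [← LinearMap.finrank_range_add_finrank_ker h.restrictDer]
  refine add_le_add (Submodule.finrank_le _) ?_
  have hle : LinearMap.ker h.restrictDer ≤
      ((LieAlgebra.center F N).toSubmodule.map N.toSubmodule.subtype).map (f : g →ₗ[F] G) := by
    intro y hy
    have hy0 : ∀ x ∈ N, ⁅y, f x⁆ = 0 := by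
      intro x hx
      rw [← h.restrictDer_apply y ⟨x, hx⟩, LinearMap.mem_ker.mp hy]
      simp
    obtain ⟨z, hz, rfl⟩ := h.centralizer_le hN (show y ∈ h.centralizerIdeal from hy0)
    refine ⟨z, ⟨⟨z, hz⟩, ?_, rfl⟩, rfl⟩
    refine (LieModule.mem_maxTrivSubmodule F N N _).mpr fun x => Subtype.ext (h.inj ?_)
    change f ⁅(x : g), z⁆ = f 0
    rw [LieHom.map_lie, map_zero, ← lie_skew]
    exact neg_eq_zero.mpr (hy0 x x.2)
  exact (Submodule.finrank_mono hle).trans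
    ((Submodule.finrank_map_le _ _).trans (Submodule.finrank_map_le _ _))

end TowerEmbedding

theorem tower_embedding {F : Type u} {g : Type v} [Field F] [CharZero F] [LieRing g]
    [LieAlgebra F g] [FiniteDimensional F g] (N : LieIdeal F g) (hN : N ≤ ⁅(⊤ : LieIdeal F g), N⁆)
    (h : TowerEmbedding N (LieHom.id : g →ₗ⁅F⁆ g)) (n : ℕ) :
    FiniteDimensional F (towerAux F ⟨g⟩ n).carrier ∧
      ∃ f : g →ₗ⁅F⁆ (towerAux F ⟨g⟩ n).carrier, TowerEmbedding N f := by
  induction n with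
  | zero => exact ⟨‹FiniteDimensional F g›, _, h⟩
  | succ n ih =>
    obtain ⟨_, f, hf⟩ := ih
    refine ⟨?_, _, hf.ad hN⟩
    change Module.Finite F
      (LieDerivation F (towerAux F ⟨g⟩ n).carrier (towerAux F ⟨g⟩ n).carrier)
    infer_instance

theorem stmt13 [FiniteDimensional K L]
    (hz : LieAlgebra.center K L = ⊥)
    (Cinf : LieIdeal K L) (hCinf : Cinf = ⨅ p : ℕ, LieModule.lowerCentralSeries K L L p) :
    -- if the derivation tower terminates at the complete Lie algebra `ĝ = Tower n`, then
    -- `dim ĝ ≤ dim Der (C^∞(g)) + dim Z (C^∞(g))`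
    ∀ n : ℕ, IsCompleteLieAlgebra K (Tower K L n) →
      Module.finrank K (Tower K L n) ≤
        Module.finrank K (LieDerivation K Cinf Cinf) +
          Module.finrank K (LieAlgebra.center K Cinf) := by
  intro n _
  obtain ⟨m, hm⟩ := Filter.eventually_atTop.mp
    (LieModule.eventually_iInf_lowerCentralSeries_eq K L L)
  simp only [← hCinf] at hm
  have hN : Cinf ≤ ⁅(⊤ : LieIdeal K L), Cinf⁆ := by
    conv_rhs => rw [hm m le_rfl, ← LieModule.lowerCentralSeries_succ]
    exact (hm (m + 1) (Nat.le_succ m)).le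
  have h0 : TowerEmbedding Cinf (LieHom.id : L →ₗ⁅K⁆ L) :=
    { inj := fun _ _ h => h
      filtration := by
        refine ⟨fun k => (LieModule.lowerCentralSeries K L L k).toSubmodule, m, rfl, ?_, ?_⟩
        · intro k x y hy
          change ⁅x, y⁆ ∈ LieModule.lowerCentralSeries K L L (k + 1)
          rw [LieModule.lowerCentralSeries_succ]
          exact LieSubmodule.lie_mem_lie (LieSubmodule.mem_top x) hy
        · intro y hy
          refine ⟨y, ?_, rfl⟩
          rw [hm m le_rfl]
          exact hy
      ideal := fun y x hx => ⟨⁅y, x⁆, lie_mem_right K L Cinf y x hx, rfl⟩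
      centralizer := fun y hy => by
        have : y ∈ LieAlgebra.center K L := (LieModule.mem_maxTrivSubmodule K L L y).mpr hy
        rwa [hz, LieSubmodule.mem_bot] at this }
  obtain ⟨_, f, hf⟩ := tower_embedding Cinf hN h0 n
  exact hf.finrank_le ⟨m, (hm m le_rfl).ge⟩
end

section
/- Let g be a finite-dimensional Lie algebra over a field K of characteristic 0 with Z(g) = 0. Then Der g is a complete Lie algebra if and only if ad g is a characteristic ideal of Der g (i.e., ad g is stable under every derivation of Der g). -/
/-!
Write `ad : L → Der L`. Since `[δ, ad x] = ad (δ x)`, every inner derivation of `Der L` preserves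
`ad L`, which gives one direction. Conversely, `ad` is injective because the center is trivial, so
the centralizer of `ad L` in `Der L` is zero (`eq_zero_of_lie_ad_eq_zero`); in particular
`Der L` has trivial center. If a derivation `D` of `Der L` preserves `ad L`, transporting its
restriction along `ad` yields `δ ∈ Der L` with `D (ad x) = ad (δ x) = [δ, ad x]`. The derivation
`D - [δ, ·]` kills `ad L`, hence maps `Der L` into the centralizer of `ad L`, so it vanishes
and `D` is inner.
-/

/-!
STATEMENT 14: Let `g` be a finite-dimensional Lie algebra over a field `K` of
characteristic 0 with `Z(g) = 0`.  Then `Der g` is a complete Lie algebra if and only if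
`ad g` is a characteristic ideal of `Der g` (i.e. stable under every derivation of `Der g`).
-/

variable (K L : Type*) [Field K] [CharZero K] [LieRing L] [LieAlgebra K L]

theorem ad_injective_of_center_eq_bot {K L : Type*} [Field K] [LieRing L] [LieAlgebra K L]
    (hz : LieAlgebra.center K L = ⊥) : Function.Injective (LieDerivation.ad K L) := by
  rw [← LieHom.ker_eq_bot, LieDerivation.ad_ker_eq_center, hz]

theorem lie_ad_eq {K L : Type*} [Field K] [LieRing L] [LieAlgebra K L]
    (δ : LieDerivation K L L) (x : L) :
    ⁅δ, LieDerivation.ad K L x⁆ = LieDerivation.ad K L (δ x) := by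
  ext y
  simp

/-- If the center of `L` is trivial, then the centralizer of `ad L` in `Der L` is zero. -/
theorem eq_zero_of_lie_ad_eq_zero {K L : Type*} [Field K] [LieRing L] [LieAlgebra K L]
    (hz : LieAlgebra.center K L = ⊥) (δ : LieDerivation K L L)
    (h : ∀ x, ⁅δ, LieDerivation.ad K L x⁆ = 0) : δ = 0 := by
  ext x
  apply ad_injective_of_center_eq_bot hz
  rw [← lie_ad_eq, h, LieDerivation.zero_apply, map_zero]

/-- A derivation of `Der L` that preserves `ad L` agrees on `ad L` with the bracket by some
`δ ∈ Der L`, namely its restriction to `ad L` transported to `L` along the injective `ad`. -/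
theorem exists_derivation_of_preserves_ad {K L : Type*} [Field K] [LieRing L] [LieAlgebra K L]
    (hz : LieAlgebra.center K L = ⊥)
    (D : LieDerivation K (LieDerivation K L L) (LieDerivation K L L))
    (h : ∀ x : L, ∃ y : L, D (LieDerivation.ad K L x) = LieDerivation.ad K L y) :
    ∃ δ : LieDerivation K L L, ∀ x, D (LieDerivation.ad K L x) = ⁅δ, LieDerivation.ad K L x⁆ := by
  have hinj := ad_injective_of_center_eq_bot hz
  choose f hf using h
  refine ⟨⟨⟨⟨f, fun x y => hinj ?_⟩, fun c x => hinj ?_⟩, fun x y => hinj ?_⟩, fun x => ?_⟩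
  · rw [← hf, map_add, map_add, map_add, hf, hf]
  · rw [← hf, map_smul, map_smul, hf]
    simp
  · change LieDerivation.ad K L (f ⁅x, y⁆) = LieDerivation.ad K L (⁅x, f y⁆ - ⁅y, f x⁆)
    rw [← hf, LieHom.map_lie, LieDerivation.apply_lie_eq_sub, map_sub, LieHom.map_lie,
      LieHom.map_lie, hf, hf]
  · rw [lie_ad_eq, hf]
    rfl

theorem stmt14 [FiniteDimensional K L]
    (hz : LieAlgebra.center K L = ⊥) :
    IsCompleteLieAlgebra K (LieDerivation K L L) ↔
      (∀ D : LieDerivation K (LieDerivation K L L) (LieDerivation K L L),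
        ∀ x : L, ∃ y : L, D (LieDerivation.ad K L x) = LieDerivation.ad K L y) := by
  refine ⟨fun hc D x => ?_, fun h => ⟨?_, fun D => ?_⟩⟩
  · obtain ⟨δ, hδ⟩ := hc.2 D
    exact ⟨δ x, by rw [hδ, lie_ad_eq]⟩
  · rw [LieSubmodule.eq_bot_iff]
    intro δ hδ
    refine eq_zero_of_lie_ad_eq_zero hz δ fun x => ?_
    rw [← lie_skew, (LieModule.mem_maxTrivSubmodule K _ _ δ).1 hδ, neg_zero]
  · obtain ⟨δ, hδ⟩ := exists_derivation_of_preserves_ad hz D (h D)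
    refine ⟨δ, fun E => sub_eq_zero.1 <| eq_zero_of_lie_ad_eq_zero hz _ fun x => ?_⟩
    -- Expand `D [E, ad x]` in two ways: by the Leibniz rule, and as `D (ad (E x)) = [δ, [E, ad x]]`.
    have h₁ := D.apply_lie_eq_add E (LieDerivation.ad K L x)
    rw [lie_ad_eq E x, hδ, hδ, ← lie_ad_eq E x, leibniz_lie, add_comm, add_left_cancel_iff] at h₁
    rw [sub_lie, h₁, sub_self]
end

section
/- Let g be a finite-dimensional Lie algebra over a field K of characteristic 0 with Z(g) = 0 and [g, g] = g. Then Der g is a complete Lie algebra. -/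
/-!
For `g` centerless, `ad : g → Der g` is injective, and `⁅E, ad x⁆ = ad (E x)` for every derivation
`E`. Hence a derivation commuting with all inner derivations is zero, which gives `Z(Der g) = 0`.

Let `d` be a derivation of `Der g`. Since `g` is perfect, `ad g` is spanned by the brackets
`⁅ad x, ad y⁆`, and `ad g` is an ideal of `Der g`, so the Leibniz rule shows that `d` preserves
`ad g` (`exists_ad_eq_apply_ad`). Transporting `d` along the injection `ad` gives a derivation `D`
of `g` with `d (ad x) = ad (D x) = ⁅D, ad x⁆` (`exists_derivation_apply_ad`). For any `E` in `Der g`,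
applying `d` to `ad (E x) = ⁅E, ad x⁆` then shows that `d E - ⁅D, E⁆` commutes with every `ad x`,
so `d E = ⁅D, E⁆`.
-/

/-!
STATEMENT 15: Let `g` be a finite-dimensional Lie algebra over a field `K` of
characteristic 0 with `Z(g) = 0` and `[g, g] = g`.  Then `Der g` is a complete Lie algebra.
-/

variable (K L : Type*) [Field K] [CharZero K] [LieRing L] [LieAlgebra K L]

section

variable {R A : Type*} [CommRing R] [LieRing A] [LieAlgebra R A]

theorem eq_zero_of_lie_ad_eq_zero_s15 (hz : LieAlgebra.center R A = ⊥) (E : LieDerivation R A A)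
    (hE : ∀ x, ⁅E, LieDerivation.ad R A x⁆ = 0) : E = 0 := by
  ext x
  apply LieDerivation.injective_ad_of_center_eq_bot hz
  rw [← LieDerivation.lie_der_ad_eq_ad_der, hE x, LieDerivation.zero_apply, map_zero]

/-- A derivation of `Der A` preserves the ideal of inner derivations when `A` is perfect: on
`⁅ad x, ad y⁆` this is the Leibniz rule, and such brackets span. -/
theorem exists_ad_eq_apply_ad (hp : ⁅(⊤ : LieIdeal R A), (⊤ : LieIdeal R A)⁆ = ⊤)
    (d : LieDerivation R (LieDerivation R A A) (LieDerivation R A A)) (x : A) :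
    ∃ y, LieDerivation.ad R A y = d (LieDerivation.ad R A x) := by
  have hx : x ∈ Submodule.span R
      {m : A | ∃ a ∈ (⊤ : LieIdeal R A), ∃ b ∈ (⊤ : LieIdeal R A), ⁅a, b⁆ = m} := by
    rw [← LieSubmodule.lieIdeal_oper_eq_linear_span', hp]
    trivial
  induction hx using Submodule.span_induction with
  | mem m hm =>
    obtain ⟨a, -, b, -, rfl⟩ := hm
    refine ⟨d (LieDerivation.ad R A a) b - d (LieDerivation.ad R A b) a, ?_⟩
    rw [LieHom.map_lie, LieDerivation.apply_lie_eq_sub, map_sub, ← LieDerivation.lie_der_ad_eq_ad_der,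
      ← LieDerivation.lie_der_ad_eq_ad_der,
      ← lie_skew (d (LieDerivation.ad R A a)) (LieDerivation.ad R A b),
      ← lie_skew (d (LieDerivation.ad R A b)) (LieDerivation.ad R A a)]
    abel
  | zero => exact ⟨0, by simp⟩
  | add u v _ _ hu hv =>
    obtain ⟨u', hu⟩ := hu
    obtain ⟨v', hv⟩ := hv
    exact ⟨u' + v', by rw [map_add, map_add, map_add, hu, hv]⟩
  | smul c u _ hu =>
    obtain ⟨u', hu⟩ := hu
    exact ⟨c • u', by rw [map_smul, map_smul, map_smul, hu]⟩

/-- For `A` centerless and perfect, every derivation of `Der A` agrees on inner derivations with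
bracketing by some `D : Der A`, since `ad (D x) = ⁅D, ad x⁆`. -/
theorem exists_derivation_apply_ad (hz : LieAlgebra.center R A = ⊥)
    (hp : ⁅(⊤ : LieIdeal R A), (⊤ : LieIdeal R A)⁆ = ⊤)
    (d : LieDerivation R (LieDerivation R A A) (LieDerivation R A A)) :
    ∃ D : LieDerivation R A A, ∀ x, d (LieDerivation.ad R A x) = LieDerivation.ad R A (D x) := by
  have hinj := LieDerivation.injective_ad_of_center_eq_bot hz
  choose f hf using exists_ad_eq_apply_ad hp d
  refine ⟨{ toFun := f, map_add' := ?_, map_smul' := ?_, leibniz' := ?_ }, fun x ↦ (hf x).symm⟩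
  · intro x y
    apply hinj
    rw [hf, map_add, map_add, map_add, hf, hf]
  · intro c x
    apply hinj
    rw [hf, map_smul, map_smul, RingHom.id_apply, map_smul, hf]
  · intro x y
    apply hinj
    change LieDerivation.ad R A (f ⁅x, y⁆) = LieDerivation.ad R A (⁅x, f y⁆ - ⁅y, f x⁆)
    rw [hf, LieHom.map_lie, LieDerivation.apply_lie_eq_sub, map_sub, LieHom.map_lie,
      LieHom.map_lie, hf, hf]

end

theorem stmt15 [FiniteDimensional K L]
    (hz : LieAlgebra.center K L = ⊥)
    (hperfect : ⁅(⊤ : LieIdeal K L), (⊤ : LieIdeal K L)⁆ = ⊤) :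
    IsCompleteLieAlgebra K (LieDerivation K L L) := by
  refine ⟨(LieSubmodule.eq_bot_iff _).mpr fun E hE ↦ ?_, fun d ↦ ?_⟩
  · refine eq_zero_of_lie_ad_eq_zero_s15 hz E fun x ↦ ?_
    rw [← lie_skew, (LieModule.mem_maxTrivSubmodule _ _ _ E).mp hE, neg_zero]
  · obtain ⟨D, hD⟩ := exists_derivation_apply_ad hz hperfect d
    refine ⟨D, fun E ↦ sub_eq_zero.mp (eq_zero_of_lie_ad_eq_zero_s15 hz _ fun x ↦ ?_)⟩
    -- Compare two computations of `d (ad (E x))`: directly, and via `ad (E x) = ⁅E, ad x⁆`.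
    have h := hD (E x)
    rw [← LieDerivation.lie_der_ad_eq_ad_der, LieDerivation.apply_lie_eq_add, hD,
      LieDerivation.lie_der_ad_eq_ad_der, LieDerivation.lie_der_ad_eq_ad_der, ← map_add] at h
    have h' := LieDerivation.injective_ad_of_center_eq_bot hz h
    rw [LieDerivation.lie_der_ad_eq_ad_der, LieDerivation.sub_apply,
      LieDerivation.commutator_apply, ← h']
    simp
end

section
/- Let g₁ and g₂ be finite-dimensional Lie algebras over a field K of characteristic 0 and let g = g₁ × g₂ be their direct product. For k = 1, 2, let D̄_k := {f ∈ Der(g₁ × g₂) : f vanishes on the other factor and f(g_k) ⊆ g_k} (so D̄_k ≅ Der g_k), and for i ≠ j let I_{ij} := {f ∈ Der(g₁ × g₂) : f vanishes on [g_i, g_i] and on g_j, and f(g₁ × g₂) ⊆ Z(g_j)}. Then Der(g₁ × g₂) = D̄₁ ⊕ D̄₂ ⊕ I₁₂ ⊕ I₂₁ as a direct sum of vector spaces. -/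
/-!
A derivation `f` of `g₁ × g₂` is a 2×2 block matrix of linear maps `f_{ij} : g_i → g_j`. Since
`⁅(x, 0), (0, y)⁆ = 0`, the Leibniz rule gives `⁅x, (f (0, y)).1⁆ = 0` and `⁅y, (f (x, 0)).2⁆ = 0`
(`lie_fst_eq_zero`, `lie_snd_eq_zero`): the off-diagonal blocks take values in the centres. Applied
to two elements of the same factor, it shows that the diagonal blocks are derivations and that the
off-diagonal ones kill the derived ideals (`snd_eq_zero_of_mem_derived`,
`fst_eq_zero_of_mem_derived`). Hence each block,
extended by zero, is a derivation of `g₁ × g₂` lying in the corresponding summand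
(`block₁₁`, `block₂₂`, `block₁₂`, `block₂₁`). Directness holds because an element of the sum has its
four blocks in four different positions.
-/

/-!
STATEMENT 16: Let `g₁`, `g₂` be finite-dimensional Lie algebras over a field `K` of
characteristic 0 and `g = g₁ × g₂`.  With `D̄_k` the derivations vanishing on the other
factor and preserving `g_k`, and `I_{ij}` the derivations vanishing on `[g_i, g_i]` and on
`g_j` with image in `Z(g_j)`, one has `Der(g₁ × g₂) = D̄₁ ⊕ D̄₂ ⊕ I₁₂ ⊕ I₂₁`.
-/

variable (K L₁ L₂ : Type*) [Field K] [CharZero K]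
  [LieRing L₁] [LieAlgebra K L₁] [LieRing L₂] [LieAlgebra K L₂]

instance prodLieRing : LieRing (L₁ × L₂) where
  bracket x y := (⁅x.1, y.1⁆, ⁅x.2, y.2⁆)
  add_lie x y z := Prod.ext (add_lie _ _ _) (add_lie _ _ _)
  lie_add x y z := Prod.ext (lie_add _ _ _) (lie_add _ _ _)
  lie_self x := Prod.ext (lie_self _) (lie_self _)
  leibniz_lie x y z := Prod.ext (leibniz_lie _ _ _) (leibniz_lie _ _ _)

instance prodLieAlgebra : LieAlgebra K (L₁ × L₂) where
  lie_smul c x y := Prod.ext (lie_smul _ _ _) (lie_smul _ _ _)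

/-- `D̄₁`: derivations of `g₁ × g₂` vanishing on `0 × g₂` with image in `g₁ × 0`. -/
def derBar₁ : Submodule K (LieDerivation K (L₁ × L₂) (L₁ × L₂)) where
  carrier := {f | (∀ y : L₂, f (0, y) = 0) ∧ ∀ v : L₁ × L₂, (f v).2 = 0}
  add_mem' := by
    rintro a b ⟨ha1, ha2⟩ ⟨hb1, hb2⟩
    exact ⟨fun y => by simp [ha1 y, hb1 y], fun v => by simp [ha2 v, hb2 v]⟩
  zero_mem' := ⟨fun y => rfl, fun v => rfl⟩
  smul_mem' := by
    rintro c a ⟨ha1, ha2⟩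
    exact ⟨fun y => by simp [ha1 y], fun v => by simp [ha2 v]⟩

/-- `D̄₂`: derivations of `g₁ × g₂` vanishing on `g₁ × 0` with image in `0 × g₂`. -/
def derBar₂ : Submodule K (LieDerivation K (L₁ × L₂) (L₁ × L₂)) where
  carrier := {f | (∀ x : L₁, f (x, 0) = 0) ∧ ∀ v : L₁ × L₂, (f v).1 = 0}
  add_mem' := by
    rintro a b ⟨ha1, ha2⟩ ⟨hb1, hb2⟩
    exact ⟨fun y => by simp [ha1 y, hb1 y], fun v => by simp [ha2 v, hb2 v]⟩
  zero_mem' := ⟨fun y => rfl, fun v => rfl⟩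
  smul_mem' := by
    rintro c a ⟨ha1, ha2⟩
    exact ⟨fun y => by simp [ha1 y], fun v => by simp [ha2 v]⟩

/-- `I₁₂`: derivations vanishing on `[g₁, g₁]` and on `g₂`, with image in `Z(g₂)`. -/
def ideal₁₂ : Submodule K (LieDerivation K (L₁ × L₂) (L₁ × L₂)) where
  carrier := {f | (∀ z ∈ ⁅(⊤ : LieIdeal K L₁), (⊤ : LieIdeal K L₁)⁆, f (z, 0) = 0) ∧
    (∀ y : L₂, f (0, y) = 0) ∧
    ∀ v : L₁ × L₂, (f v).1 = 0 ∧ (f v).2 ∈ LieAlgebra.center K L₂}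
  add_mem' := by
    rintro a b ⟨ha1, ha2, ha3⟩ ⟨hb1, hb2, hb3⟩
    refine ⟨fun z hz => by simp [ha1 z hz, hb1 z hz], fun y => by simp [ha2 y, hb2 y],
      fun v => ⟨by simp [(ha3 v).1, (hb3 v).1], ?_⟩⟩
    simpa using add_mem (ha3 v).2 (hb3 v).2
  zero_mem' := ⟨fun z _ => rfl, fun y => rfl,
    fun v => ⟨rfl, by simpa using (LieAlgebra.center K L₂).zero_mem⟩⟩
  smul_mem' := by
    rintro c a ⟨ha1, ha2, ha3⟩
    refine ⟨fun z hz => by simp [ha1 z hz], fun y => by simp [ha2 y],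
      fun v => ⟨by simp [(ha3 v).1], ?_⟩⟩
    simpa using Submodule.smul_mem _ c (ha3 v).2
  -- (membership in the centre is stated via the underlying submodule)

/-- `I₂₁`: derivations vanishing on `[g₂, g₂]` and on `g₁`, with image in `Z(g₁)`. -/
def ideal₂₁ : Submodule K (LieDerivation K (L₁ × L₂) (L₁ × L₂)) where
  carrier := {f | (∀ z ∈ ⁅(⊤ : LieIdeal K L₂), (⊤ : LieIdeal K L₂)⁆, f (0, z) = 0) ∧
    (∀ x : L₁, f (x, 0) = 0) ∧
    ∀ v : L₁ × L₂, (f v).2 = 0 ∧ (f v).1 ∈ LieAlgebra.center K L₁}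
  add_mem' := by
    rintro a b ⟨ha1, ha2, ha3⟩ ⟨hb1, hb2, hb3⟩
    refine ⟨fun z hz => by simp [ha1 z hz, hb1 z hz], fun y => by simp [ha2 y, hb2 y],
      fun v => ⟨by simp [(ha3 v).1, (hb3 v).1], ?_⟩⟩
    simpa using add_mem (ha3 v).2 (hb3 v).2
  zero_mem' := ⟨fun z _ => rfl, fun y => rfl,
    fun v => ⟨rfl, by simpa using (LieAlgebra.center K L₁).zero_mem⟩⟩
  smul_mem' := by
    rintro c a ⟨ha1, ha2, ha3⟩
    refine ⟨fun z hz => by simp [ha1 z hz], fun y => by simp [ha2 y],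
      fun v => ⟨by simp [(ha3 v).1], ?_⟩⟩
    simpa using Submodule.smul_mem _ c (ha3 v).2

section Blocks

lemma prod_lie (v w : L₁ × L₂) : ⁅v, w⁆ = (⁅v.1, w.1⁆, ⁅v.2, w.2⁆) := rfl

variable (f : LieDerivation K (L₁ × L₂) (L₁ × L₂))

lemma map_zero_zero : f (0, 0) = 0 := map_zero f

lemma map_lie_left (x x' : L₁) :
    f (⁅x, x'⁆, 0) = (⁅x, (f (x', 0)).1⁆ - ⁅x', (f (x, 0)).1⁆, 0) := by
  have h := f.apply_lie_eq_sub (x, 0) (x', 0)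
  simpa [prod_lie] using h

lemma map_lie_right (y y' : L₂) :
    f (0, ⁅y, y'⁆) = (0, ⁅y, (f (0, y')).2⁆ - ⁅y', (f (0, y)).2⁆) := by
  have h := f.apply_lie_eq_sub (0, y) (0, y')
  simpa [prod_lie] using h

/-- The Leibniz rule applied to `⁅(x, 0), (0, y)⁆ = 0`, read in each component. -/
lemma commute_factors (x : L₁) (y : L₂) :
    ⁅x, (f (0, y)).1⁆ = 0 ∧ ⁅y, (f (x, 0)).2⁆ = 0 := by
  have h := f.apply_lie_eq_sub (x, 0) (0, y)
  simp only [prod_lie, lie_zero, zero_lie, map_zero_zero] at h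
  have h₁ := congrArg Prod.fst h
  have h₂ := congrArg Prod.snd h
  simp only [Prod.fst_zero, Prod.snd_zero, Prod.fst_sub, Prod.snd_sub, sub_zero, zero_sub] at h₁ h₂
  exact ⟨h₁.symm, neg_eq_zero.1 h₂.symm⟩

lemma lie_fst_eq_zero (x : L₁) (y : L₂) : ⁅x, (f (0, y)).1⁆ = 0 :=
  (commute_factors K L₁ L₂ f x y).1

lemma lie_snd_eq_zero (x : L₁) (y : L₂) : ⁅y, (f (x, 0)).2⁆ = 0 :=
  (commute_factors K L₁ L₂ f x y).2

lemma map_eq_add (v : L₁ × L₂) : f v = f (v.1, 0) + f (0, v.2) := by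
  rw [← map_add]; simp

lemma snd_eq_zero_of_mem_derived {z : L₁}
    (hz : z ∈ ⁅(⊤ : LieIdeal K L₁), (⊤ : LieIdeal K L₁)⁆) : (f (z, 0)).2 = 0 := by
  rw [← LieSubmodule.mem_toSubmodule, LieSubmodule.lieIdeal_oper_eq_linear_span'] at hz
  refine (Submodule.span_le (p := LinearMap.ker
    (LinearMap.snd K L₁ L₂ ∘ₗ f.toLinearMap ∘ₗ LinearMap.inl K L₁ L₂))).2 ?_ hz
  rintro _ ⟨x, -, x', -, rfl⟩
  exact congrArg Prod.snd (map_lie_left K L₁ L₂ f x x')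

lemma fst_eq_zero_of_mem_derived {z : L₂}
    (hz : z ∈ ⁅(⊤ : LieIdeal K L₂), (⊤ : LieIdeal K L₂)⁆) : (f (0, z)).1 = 0 := by
  rw [← LieSubmodule.mem_toSubmodule, LieSubmodule.lieIdeal_oper_eq_linear_span'] at hz
  refine (Submodule.span_le (p := LinearMap.ker
    (LinearMap.fst K L₁ L₂ ∘ₗ f.toLinearMap ∘ₗ LinearMap.inr K L₁ L₂))).2 ?_ hz
  rintro _ ⟨y, -, y', -, rfl⟩
  exact congrArg Prod.fst (map_lie_right K L₁ L₂ f y y')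

/-- The diagonal block `g₁ → g₁` of `f`, extended by zero on `g₂`. -/
def block₁₁ : LieDerivation K (L₁ × L₂) (L₁ × L₂) where
  toLinearMap := LinearMap.inl K L₁ L₂ ∘ₗ LinearMap.fst K L₁ L₂ ∘ₗ f.toLinearMap ∘ₗ
    LinearMap.inl K L₁ L₂ ∘ₗ LinearMap.fst K L₁ L₂
  leibniz' v w := by
    change (((f (⁅v.1, w.1⁆, 0)).1, 0) : L₁ × L₂) =
      ⁅v, (((f (w.1, 0)).1, 0) : L₁ × L₂)⁆ - ⁅w, (((f (v.1, 0)).1, 0) : L₁ × L₂)⁆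
    simp [map_lie_left]

lemma block₁₁_apply (v : L₁ × L₂) : block₁₁ K L₁ L₂ f v = ((f (v.1, 0)).1, 0) := rfl

/-- The diagonal block `g₂ → g₂` of `f`, extended by zero on `g₁`. -/
def block₂₂ : LieDerivation K (L₁ × L₂) (L₁ × L₂) where
  toLinearMap := LinearMap.inr K L₁ L₂ ∘ₗ LinearMap.snd K L₁ L₂ ∘ₗ f.toLinearMap ∘ₗ
    LinearMap.inr K L₁ L₂ ∘ₗ LinearMap.snd K L₁ L₂
  leibniz' v w := by
    change ((0, (f (0, ⁅v.2, w.2⁆)).2) : L₁ × L₂) =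
      ⁅v, ((0, (f (0, w.2)).2) : L₁ × L₂)⁆ - ⁅w, ((0, (f (0, v.2)).2) : L₁ × L₂)⁆
    simp [map_lie_right]

lemma block₂₂_apply (v : L₁ × L₂) : block₂₂ K L₁ L₂ f v = (0, (f (0, v.2)).2) := rfl

/-- The off-diagonal block `g₁ → g₂` of `f`, extended by zero on `g₂`. -/
def block₁₂ : LieDerivation K (L₁ × L₂) (L₁ × L₂) where
  toLinearMap := LinearMap.inr K L₁ L₂ ∘ₗ LinearMap.snd K L₁ L₂ ∘ₗ f.toLinearMap ∘ₗ
    LinearMap.inl K L₁ L₂ ∘ₗ LinearMap.fst K L₁ L₂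
  leibniz' v w := by
    change ((0, (f (⁅v.1, w.1⁆, 0)).2) : L₁ × L₂) =
      ⁅v, ((0, (f (w.1, 0)).2) : L₁ × L₂)⁆ - ⁅w, ((0, (f (v.1, 0)).2) : L₁ × L₂)⁆
    simp [map_lie_left, lie_snd_eq_zero]

lemma block₁₂_apply (v : L₁ × L₂) : block₁₂ K L₁ L₂ f v = (0, (f (v.1, 0)).2) := rfl

/-- The off-diagonal block `g₂ → g₁` of `f`, extended by zero on `g₁`. -/
def block₂₁ : LieDerivation K (L₁ × L₂) (L₁ × L₂) where
  toLinearMap := LinearMap.inl K L₁ L₂ ∘ₗ LinearMap.fst K L₁ L₂ ∘ₗ f.toLinearMap ∘ₗ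
    LinearMap.inr K L₁ L₂ ∘ₗ LinearMap.snd K L₁ L₂
  leibniz' v w := by
    change (((f (0, ⁅v.2, w.2⁆)).1, 0) : L₁ × L₂) =
      ⁅v, (((f (0, w.2)).1, 0) : L₁ × L₂)⁆ - ⁅w, (((f (0, v.2)).1, 0) : L₁ × L₂)⁆
    simp [map_lie_right, lie_fst_eq_zero]

lemma block₂₁_apply (v : L₁ × L₂) : block₂₁ K L₁ L₂ f v = ((f (0, v.2)).1, 0) := rfl

lemma block₁₁_mem : block₁₁ K L₁ L₂ f ∈ derBar₁ K L₁ L₂ :=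
  ⟨fun y => by simp [block₁₁_apply, map_zero_zero], fun v => rfl⟩

lemma block₂₂_mem : block₂₂ K L₁ L₂ f ∈ derBar₂ K L₁ L₂ :=
  ⟨fun x => by simp [block₂₂_apply, map_zero_zero], fun v => rfl⟩

lemma block₁₂_mem : block₁₂ K L₁ L₂ f ∈ ideal₁₂ K L₁ L₂ :=
  ⟨fun z hz => by simp [block₁₂_apply, snd_eq_zero_of_mem_derived K L₁ L₂ f hz],
    fun y => by simp [block₁₂_apply, map_zero_zero],
    fun v => ⟨rfl, fun y => lie_snd_eq_zero K L₁ L₂ f v.1 y⟩⟩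

lemma block₂₁_mem : block₂₁ K L₁ L₂ f ∈ ideal₂₁ K L₁ L₂ :=
  ⟨fun z hz => by simp [block₂₁_apply, fst_eq_zero_of_mem_derived K L₁ L₂ f hz],
    fun x => by simp [block₂₁_apply, map_zero_zero],
    fun v => ⟨rfl, fun x => lie_fst_eq_zero K L₁ L₂ f x v.2⟩⟩

lemma sum_blocks : block₁₁ K L₁ L₂ f + block₂₂ K L₁ L₂ f + block₁₂ K L₁ L₂ f +
    block₂₁ K L₁ L₂ f = f := by
  refine LieDerivation.ext fun v => ?_
  rw [map_eq_add K L₁ L₂ f v]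
  ext <;> simp [block₁₁_apply, block₂₂_apply, block₁₂_apply, block₂₁_apply, add_comm]

lemma eq_zero_of_blocks (h₁ : ∀ x, f (x, 0) = 0) (h₂ : ∀ y, f (0, y) = 0) : f = 0 := by
  refine LieDerivation.ext fun v => ?_
  rw [map_eq_add K L₁ L₂ f v, h₁, h₂, add_zero, LieDerivation.zero_apply]

end Blocks

theorem stmt16 [FiniteDimensional K L₁] [FiniteDimensional K L₂] :
    derBar₁ K L₁ L₂ ⊔ derBar₂ K L₁ L₂ ⊔ ideal₁₂ K L₁ L₂ ⊔ ideal₂₁ K L₁ L₂ = ⊤ ∧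
    Disjoint (derBar₁ K L₁ L₂) (derBar₂ K L₁ L₂) ∧
    Disjoint (derBar₁ K L₁ L₂ ⊔ derBar₂ K L₁ L₂) (ideal₁₂ K L₁ L₂) ∧
    Disjoint (derBar₁ K L₁ L₂ ⊔ derBar₂ K L₁ L₂ ⊔ ideal₁₂ K L₁ L₂) (ideal₂₁ K L₁ L₂) := by
  refine ⟨?_, ?_, ?_, ?_⟩
  · refine eq_top_iff.2 fun f _ => ?_
    rw [← sum_blocks K L₁ L₂ f]
    exact Submodule.add_mem_sup (Submodule.add_mem_sup (Submodule.add_mem_sup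
      (block₁₁_mem K L₁ L₂ f) (block₂₂_mem K L₁ L₂ f)) (block₁₂_mem K L₁ L₂ f))
      (block₂₁_mem K L₁ L₂ f)
  · rw [Submodule.disjoint_def]
    rintro f ⟨hf, -⟩ ⟨hf', -⟩
    exact eq_zero_of_blocks K L₁ L₂ f hf' hf
  · rw [Submodule.disjoint_def]
    rintro f hf ⟨-, h₂, h₃⟩
    obtain ⟨a, ⟨-, ha⟩, b, ⟨hb, -⟩, rfl⟩ := Submodule.mem_sup.1 hf
    refine eq_zero_of_blocks K L₁ L₂ _ (fun x => Prod.ext (h₃ _).1 ?_) h₂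
    simp [ha, hb]
  · rw [Submodule.disjoint_def]
    rintro f hf ⟨-, h₁, h₃⟩
    obtain ⟨d, hd, c, ⟨-, hc, -⟩, rfl⟩ := Submodule.mem_sup.1 hf
    obtain ⟨a, ⟨ha, -⟩, b, ⟨-, hb⟩, rfl⟩ := Submodule.mem_sup.1 hd
    refine eq_zero_of_blocks K L₁ L₂ _ h₁ (fun y => Prod.ext ?_ (h₃ _).1)
    simp [ha, hb, hc]
end

section
/- Let g be a finite-dimensional Lie algebra over a field K of characteristic 0 and let a be a characteristic ideal of g of codimension 1. Then: (1) dim(Der g) − dim g = dim(Der g|_a) − dim(ad g|_a), where Der g|_a and ad g|_a denote the spaces of restrictions to a of derivations of g, respectively of inner derivations of g (both map a into a). (2) If moreover dim(Der g) = dim g, then (i) Der g|_b = ad g|_b for every ideal b of g contained in a, and (ii) every ideal of g of codimension 1 is characteristic. -/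
/-!
Write `a = ker φ` for a linear functional `φ`; it kills all brackets.  A rank-one map `θ ⊗ w`,
`u ↦ θ u • w`, with `θ` killing brackets, is a derivation as soon as `θ v • ⁅u, w⁆` is symmetric in
`u, v` (`rankOneDer`); every derivation constructed below is of this form.

For (1): the derivations vanishing on `a` are exactly the `φ ⊗ z` with `z` in the centralizer of
`a`, and this centralizer is also the kernel of `g → End a`, `x ↦ ad x|_a`.  So both restriction
maps, from `Der g` and from `g`, have kernels of the same dimension (`finrank_ker_eq`), and
rank-nullity gives the formula.

If `dim Der g = dim g`, then `Der g|_a = ad g|_a` by (1), whence (i).  For (ii), suppose `b = ker ψ`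
is an ideal and `d` a derivation with `d x ∈ g ∖ b` for some `x ∈ b`.  Subtracting an inner
derivation, assume `d` kills `a`; then `z = d x` centralizes `a`, and `x ∉ a`.
* `z ∈ a`: otherwise `z` is central in `g`, so `ψ ⊗ z` is a derivation, and it does not preserve `a`.
* `ad x` maps the centre of `a` into itself and into `b`, hence misses `z`; it is therefore not
  injective, which gives a central element `w ≠ 0` of `g`.
* The derivation `ψ ⊗ w` agrees on `a` with some `ad y`, and `y ∉ a` because
  `⁅y, z⁆ = ψ z • w ≠ 0`. Hence `ad y = θ ⊗ w` on `g` for a functional `θ` killing brackets, so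
  `θ ⊗ y` is a derivation; it sends `z ∈ a` to a nonzero multiple of `y ∉ a`, contradicting that
  `a` is characteristic.
-/

/-!
STATEMENT 17: Let `a` be a characteristic ideal of `g` of codimension 1.  Then:
(1) `dim (Der g) − dim g = dim (Der g|_a) − dim (ad g|_a)`;
(2) if moreover `dim (Der g) = dim g`, then
    (i) `Der g|_b = ad g|_b` for every ideal `b` of `g` contained in `a`, and
    (ii) every ideal of `g` of codimension 1 is characteristic.
-/

variable (K L : Type*) [Field K] [CharZero K] [LieRing L] [LieAlgebra K L]

/-- Restriction of derivations of `g` to an invariant ideal `a`, as endomorphisms of `a`. -/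
def restrictDer (a : LieIdeal K L)
    (hchar : ∀ d : LieDerivation K L L, ∀ x ∈ a, d x ∈ a) :
    LieDerivation K L L →ₗ[K] Module.End K ↥a.toSubmodule where
  toFun d := d.toLinearMap.restrict
    (p := a.toSubmodule) (q := a.toSubmodule) (fun x hx => hchar d x hx)
  map_add' := by
    intro d₁ d₂
    ext x
    simp [LinearMap.restrict_apply]
  map_smul' := by
    intro c d
    ext x
    simp [LinearMap.restrict_apply]

/-- Restriction of derivations of `g` to a subspace `b`, as linear maps `b → g`. -/
def resMap (b : Submodule K L) : LieDerivation K L L →ₗ[K] (↥b →ₗ[K] L) where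
  toFun d := d.toLinearMap ∘ₗ b.subtype
  map_add' := by intro d₁ d₂; ext x; simp
  map_smul' := by intro c d; ext x; simp

section Helpers

set_option linter.unusedSectionVars false

variable {K L}

/-- The derivation `u ↦ θ u • w`. -/
def rankOneDer (θ : L →ₗ[K] K) (w : L) (hθ : ∀ u v : L, θ ⁅u, v⁆ = 0)
    (h : ∀ u v : L, θ v • ⁅u, w⁆ = θ u • ⁅v, w⁆) : LieDerivation K L L where
  toLinearMap := θ.smulRight w
  leibniz' u v := by
    simp [hθ, h u v]

@[simp] lemma rankOneDer_apply (θ : L →ₗ[K] K) (w : L) (hθ : ∀ u v : L, θ ⁅u, v⁆ = 0)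
    (h : ∀ u v : L, θ v • ⁅u, w⁆ = θ u • ⁅v, w⁆) (u : L) :
    rankOneDer θ w hθ h u = θ u • w := rfl

/-- An ideal of codimension one is the kernel of a nonzero functional, which kills brackets
because the one-dimensional quotient is abelian. -/
lemma exists_functional (a : LieIdeal K L)
    (hcodim : Module.finrank K (L ⧸ a.toSubmodule) = 1) :
    ∃ φ : L →ₗ[K] K, (∀ x, φ x = 0 ↔ x ∈ a) ∧ (∃ x, φ x = 1) ∧ ∀ u v : L, φ ⁅u, v⁆ = 0 := by
  have : FiniteDimensional K (L ⧸ a.toSubmodule) :=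
    Module.finite_of_finrank_pos (by omega)
  let e : (L ⧸ a.toSubmodule) ≃ₗ[K] K := LinearEquiv.ofFinrankEq _ _ (by simp [hcodim])
  have hker : ∀ x, (e.toLinearMap ∘ₗ a.toSubmodule.mkQ) x = 0 ↔ x ∈ a := by
    intro x
    simp
  have hone : ∃ x, (e.toLinearMap ∘ₗ a.toSubmodule.mkQ) x = 1 := by
    obtain ⟨x, hx⟩ := a.toSubmodule.mkQ_surjective (e.symm 1)
    exact ⟨x, by rw [LinearMap.comp_apply, hx]; simp⟩
  generalize e.toLinearMap ∘ₗ a.toSubmodule.mkQ = φ at hker hone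
  refine ⟨φ, hker, hone, fun u v => ?_⟩
  obtain ⟨x, hx⟩ := hone
  -- `u` and `v` are multiples of `x` modulo `a`, and `⁅x, x⁆ = 0`.
  have hmod : ∀ u, u - φ u • x ∈ a := fun u => (hker _).1 (by simp [hx])
  have h1 : ⁅u - φ u • x, v⁆ ∈ a := lie_mem_left K L a _ _ (hmod u)
  have h2 : ⁅x, v - φ v • x⁆ ∈ a := lie_mem_right K L a _ _ (hmod v)
  rw [← hker] at h1 h2
  simp only [sub_lie, smul_lie, lie_sub, lie_smul, lie_self, map_sub, map_smul, smul_zero,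
    sub_zero] at h1 h2
  rw [h2, smul_zero, sub_zero] at h1
  exact h1

/-- Derivations killing `a` are the `φ ⊗ z` with `z` centralizing `a`. -/
lemma finrank_ker_eq [FiniteDimensional K L] (a : LieIdeal K L)
    (hchar : ∀ d : LieDerivation K L L, ∀ x ∈ a, d x ∈ a)
    (hcodim : Module.finrank K (L ⧸ a.toSubmodule) = 1) :
    Module.finrank K (LinearMap.ker (restrictDer K L a hchar)) =
      Module.finrank K (LinearMap.ker
        (restrictDer K L a hchar ∘ₗ (LieDerivation.ad K L).toLinearMap)) := by
  obtain ⟨φ, hφ, ⟨x, hx⟩, hφb⟩ := exists_functional a hcodim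
  have hD : ∀ d : LieDerivation K L L,
      d ∈ LinearMap.ker (restrictDer K L a hchar) ↔ ∀ u ∈ a, d u = 0 := by
    intro d
    rw [LinearMap.mem_ker]
    refine ⟨fun h u hu => ?_, fun h => ?_⟩
    · exact congrArg Subtype.val (LinearMap.congr_fun h ⟨u, hu⟩)
    · ext u
      exact h u u.2
  have hC : ∀ z : L, z ∈ LinearMap.ker
      (restrictDer K L a hchar ∘ₗ (LieDerivation.ad K L).toLinearMap) ↔ ∀ u ∈ a, ⁅z, u⁆ = 0 := by
    intro z
    have h := hD (LieDerivation.ad K L z)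
    simp only [LieDerivation.ad_apply_apply] at h
    exact h
  have hmod : ∀ u, u - φ u • x ∈ a := fun u => (hφ _).1 (by simp [hx])
  refine LinearEquiv.finrank_eq
    { toFun := fun d => ⟨d.1 x, (hC _).2 fun u hu => ?_⟩
      map_add' := fun d e => by ext; simp
      map_smul' := fun c d => by ext; simp
      invFun := fun z => ⟨rankOneDer φ z.1 hφb fun u v => ?_, (hD _).2 fun u hu => ?_⟩
      left_inv := fun d => ?_
      right_inv := fun z => ?_ }
  · have hd := (hD d.1).1 d.2
    have h := d.1.apply_lie_eq_add x u
    rw [hd u hu, hd _ (lie_mem_right K L a _ _ hu), lie_zero, zero_add] at h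
    exact h.symm
  · have hm : φ v • u - φ u • v ∈ a := (hφ _).1 (by simp [mul_comm])
    have h := (hC z.1).1 z.2 _ hm
    rw [← lie_skew, neg_eq_zero, sub_lie, smul_lie, smul_lie, sub_eq_zero] at h
    exact h
  · simp [(hφ u).2 hu]
  · have hd := (hD d.1).1 d.2
    ext u
    have h := hd _ (hmod u)
    rw [map_sub, map_smul, sub_eq_zero] at h
    exact h.symm
  · ext
    simp [hx]

instance finite_lieDerivation [FiniteDimensional K L] :
    FiniteDimensional K (LieDerivation K L L) := by
  let f : LieDerivation K L L →ₗ[K] (L →ₗ[K] L) :=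
    { toFun := fun d => d.toLinearMap
      map_add' := fun _ _ => rfl
      map_smul' := fun _ _ => rfl }
  exact Module.Finite.of_injective f fun d e h => by
    ext u
    exact LinearMap.congr_fun h u

lemma der_sub_eq [FiniteDimensional K L] (a : LieIdeal K L)
    (hchar : ∀ d : LieDerivation K L L, ∀ x ∈ a, d x ∈ a)
    (hcodim : Module.finrank K (L ⧸ a.toSubmodule) = 1) :
    (Module.finrank K (LieDerivation K L L) : ℤ) - Module.finrank K L =
      (Module.finrank K
          (Submodule.map (restrictDer K L a hchar) (⊤ : Submodule K (LieDerivation K L L))) : ℤ)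
        - Module.finrank K
            (Submodule.map (restrictDer K L a hchar)
              (LinearMap.range (LieDerivation.ad K L).toLinearMap)) := by
  rw [Submodule.map_top, ← LinearMap.range_comp]
  have h1 := (restrictDer K L a hchar).finrank_range_add_finrank_ker
  have h2 := (restrictDer K L a hchar ∘ₗ
    (LieDerivation.ad K L).toLinearMap).finrank_range_add_finrank_ker
  have h3 := finrank_ker_eq a hchar hcodim
  omega

lemma exists_ad_eq [FiniteDimensional K L] (a : LieIdeal K L)
    (hchar : ∀ d : LieDerivation K L L, ∀ x ∈ a, d x ∈ a)
    (hcodim : Module.finrank K (L ⧸ a.toSubmodule) = 1)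
    (hdim : Module.finrank K (LieDerivation K L L) = Module.finrank K L)
    (d : LieDerivation K L L) : ∃ y : L, ∀ u ∈ a, d u = ⁅y, u⁆ := by
  have h := der_sub_eq a hchar hcodim
  have heq := Submodule.eq_of_le_of_finrank_eq
    (Submodule.map_mono (f := restrictDer K L a hchar)
      (le_top : LinearMap.range (LieDerivation.ad K L).toLinearMap ≤ ⊤)) (by omega)
  have hd : restrictDer K L a hchar d ∈ Submodule.map (restrictDer K L a hchar) ⊤ :=
    ⟨d, trivial, rfl⟩
  rw [← heq] at hd
  obtain ⟨_, ⟨y, rfl⟩, hy⟩ := hd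
  refine ⟨y, fun u hu => ?_⟩
  have h : LieDerivation.ad K L y u = d u :=
    congrArg Subtype.val (LinearMap.congr_fun hy ⟨u, hu⟩)
  rw [← h, LieDerivation.ad_apply_apply]

/-- The non-surjectivity of `ad x` on the centre of `a = ker φ` yields a nonzero central element
of `g`. -/
lemma exists_central [FiniteDimensional K L] (a b : LieIdeal K L) (φ : L →ₗ[K] K)
    (hφ : ∀ x, φ x = 0 ↔ x ∈ a) {x z : L} (hxa : x ∉ a) (hxb : x ∈ b) (hza : z ∈ a)
    (hzb : z ∉ b) (hz : ∀ u ∈ a, ⁅z, u⁆ = 0) : ∃ w : L, w ≠ 0 ∧ ∀ u : L, ⁅u, w⁆ = 0 := by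
  let N : Submodule K L :=
    { carrier := {v | v ∈ a ∧ ∀ u ∈ a, ⁅v, u⁆ = 0}
      add_mem' := fun {v v'} hv hv' =>
        ⟨add_mem hv.1 hv'.1, fun u hu => by rw [add_lie, hv.2 u hu, hv'.2 u hu, add_zero]⟩
      zero_mem' := ⟨zero_mem a, fun u _ => zero_lie u⟩
      smul_mem' := fun c v hv =>
        ⟨a.smul_mem c hv.1, fun u hu => by rw [smul_lie, hv.2 u hu, smul_zero]⟩ }
  have hN : ∀ v ∈ N, (LieAlgebra.ad K L x : L →ₗ[K] L) v ∈ N := by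
    intro v hv
    refine ⟨lie_mem_right K L a _ _ hv.1, fun u hu => ?_⟩
    rw [LieAlgebra.ad_apply, lie_lie, hv.2 u hu, lie_zero,
      hv.2 _ (lie_mem_right K L a _ _ hu), sub_zero]
  let T : N →ₗ[K] N := (LieAlgebra.ad K L x : L →ₗ[K] L).restrict hN
  have hT : ¬ Function.Injective T := by
    intro hinj
    obtain ⟨v, hv⟩ := (LinearMap.injective_iff_surjective.1 hinj) ⟨z, hza, hz⟩
    have hv' : ⁅x, (v : L)⁆ = z := congrArg Subtype.val hv
    exact hzb (hv' ▸ lie_mem_left K L b _ _ hxb)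
  rw [← LinearMap.ker_eq_bot, Submodule.eq_bot_iff] at hT
  push Not at hT
  obtain ⟨w, hw, hw0⟩ := hT
  have hxw : ⁅x, (w : L)⁆ = 0 := congrArg Subtype.val (LinearMap.mem_ker.1 hw)
  have hφx : φ x ≠ 0 := fun h => hxa ((hφ x).1 h)
  refine ⟨w, fun h => hw0 (Subtype.ext h), fun u => ?_⟩
  have hm : u - (φ u / φ x) • x ∈ a := (hφ _).1 (by simp [hφx])
  have h := w.2.2 _ hm
  rw [← lie_skew, neg_eq_zero, sub_lie, smul_lie, hxw, smul_zero, sub_zero] at h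
  exact h

lemma codim_one_char [FiniteDimensional K L] (a : LieIdeal K L)
    (hchar : ∀ d : LieDerivation K L L, ∀ x ∈ a, d x ∈ a)
    (hcodim : Module.finrank K (L ⧸ a.toSubmodule) = 1)
    (hdim : Module.finrank K (LieDerivation K L L) = Module.finrank K L)
    (b : LieIdeal K L) (hb : Module.finrank K (L ⧸ b.toSubmodule) = 1)
    (d : LieDerivation K L L) (x : L) (hxb : x ∈ b) : d x ∈ b := by
  by_contra hdx
  obtain ⟨φ, hφ, -, hφb⟩ := exists_functional a hcodim
  obtain ⟨ψ, hψ, -, hψb⟩ := exists_functional b hb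
  obtain ⟨y₀, hy₀⟩ := exists_ad_eq a hchar hcodim hdim d
  -- `e` is `d` corrected by an inner derivation so as to kill `a`.
  obtain ⟨e, he⟩ : ∃ e : LieDerivation K L L, ∀ u, e u = d u - ⁅y₀, u⁆ :=
    ⟨d - LieDerivation.ad K L y₀, fun u => by simp⟩
  have hea : ∀ u ∈ a, e u = 0 := fun u hu => by rw [he, hy₀ u hu, sub_self]
  obtain ⟨z, hz⟩ : ∃ z, e x = z := ⟨_, rfl⟩
  have hzb : z ∉ b := by
    intro h
    apply hdx
    have := add_mem h (lie_mem_right K L b y₀ x hxb)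
    rwa [← hz, he, sub_add_cancel] at this
  have hxa : x ∉ a := fun h => hzb (by rw [← hz, hea x h]; exact zero_mem b)
  have hza' : ∀ u ∈ a, ⁅z, u⁆ = 0 := by
    intro u hu
    have h := e.apply_lie_eq_add x u
    rw [hea u hu, hea _ (lie_mem_right K L a _ _ hu), lie_zero, zero_add, hz] at h
    exact h.symm
  have hφx : φ x ≠ 0 := fun h => hxa ((hφ x).1 h)
  have hψz : ψ z ≠ 0 := fun h => hzb ((hψ z).1 h)
  have hza : z ∈ a := by
    by_contra hna
    have hφz : φ z ≠ 0 := fun h => hna ((hφ z).1 h)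
    have hcen : ∀ u : L, ⁅u, z⁆ = 0 := by
      intro u
      have hm : u - (φ u / φ z) • z ∈ a := (hφ _).1 (by simp [hφz])
      have h := hza' _ hm
      rw [lie_sub, lie_smul, lie_self, smul_zero, sub_zero, ← lie_skew, neg_eq_zero] at h
      exact h
    -- `z - (φ z / φ x) • x` lies in `a` but not in `b`.
    have hm : z - (φ z / φ x) • x ∈ a := (hφ _).1 (by simp [hφx])
    have h := hchar (rankOneDer ψ z hψb fun u v => by simp [hcen]) _ hm
    rw [← hφ] at h
    simp [(hψ x).2 hxb, hψz, hφz] at h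
  obtain ⟨w, hw0, hw⟩ := exists_central a b φ hφ hxa hxb hza hzb hza'
  obtain ⟨y, hy⟩ := exists_ad_eq a hchar hcodim hdim
    (rankOneDer ψ w hψb fun u v => by simp [hw])
  have hya : y ∉ a := by
    intro h
    have h1 := hy z hza
    rw [← lie_skew, hza' y h, neg_zero, rankOneDer_apply] at h1
    exact (smul_ne_zero hψz hw0) h1
  have hφy : φ y ≠ 0 := fun h => hya ((hφ y).1 h)
  -- `θ` agrees with `ψ` on `a` and kills `y`, so that `ad y = θ ⊗ w` on all of `g`.
  let θ : L →ₗ[K] K := ψ - (ψ y / φ y) • φ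
  have hθ : ∀ u : L, ⁅y, u⁆ = θ u • w := by
    intro u
    have hm : u - (φ u / φ y) • y ∈ a := (hφ _).1 (by simp [hφy])
    have h := hy _ hm
    rw [lie_sub, lie_smul, lie_self, smul_zero, sub_zero, rankOneDer_apply] at h
    rw [← h]
    congr 1
    simp only [θ, map_sub, map_smul, LinearMap.sub_apply, LinearMap.smul_apply, smul_eq_mul]
    ring
  have h := hchar (rankOneDer θ y (fun u v => by simp [θ, hφb, hψb]) fun u v => by
    rw [← lie_skew u y, ← lie_skew v y, hθ, hθ, smul_neg, smul_neg, smul_comm]) z hza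
  rw [← hφ] at h
  simp [θ, (hφ z).2 hza, hψz, hφy] at h

end Helpers

theorem stmt17 [FiniteDimensional K L]
    (a : LieIdeal K L)
    (hchar : ∀ d : LieDerivation K L L, ∀ x ∈ a, d x ∈ a)
    (hcodim : Module.finrank K (L ⧸ a.toSubmodule) = 1) :
    -- (1)
    (Module.finrank K (LieDerivation K L L) : ℤ) - Module.finrank K L =
      (Module.finrank K
          (Submodule.map (restrictDer K L a hchar) (⊤ : Submodule K (LieDerivation K L L))) : ℤ)
        - Module.finrank K
            (Submodule.map (restrictDer K L a hchar)
              (LinearMap.range (LieDerivation.ad K L).toLinearMap)) ∧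
    -- (2)
    (Module.finrank K (LieDerivation K L L) = Module.finrank K L →
      -- (i)  Der g|_b = ad g|_b for every ideal b ⊆ a
      (∀ b : LieIdeal K L, b ≤ a →
        Submodule.map (resMap K L b.toSubmodule) (⊤ : Submodule K (LieDerivation K L L)) =
          Submodule.map (resMap K L b.toSubmodule)
            (LinearMap.range (LieDerivation.ad K L).toLinearMap)) ∧
      -- (ii) every ideal of codimension 1 is characteristic
      ∀ b : LieIdeal K L, Module.finrank K (L ⧸ b.toSubmodule) = 1 →
        ∀ d : LieDerivation K L L, ∀ x ∈ b, d x ∈ b) := by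
  refine ⟨der_sub_eq a hchar hcodim, fun hdim => ⟨fun b hba => ?_, fun b hb d x hx =>
    codim_one_char a hchar hcodim hdim b hb d x hx⟩⟩
  refine le_antisymm ?_ (Submodule.map_mono le_top)
  rintro _ ⟨d, -, rfl⟩
  obtain ⟨y, hy⟩ := exists_ad_eq a hchar hcodim hdim d
  refine ⟨LieDerivation.ad K L y, ⟨y, rfl⟩, ?_⟩
  ext u
  exact (LieDerivation.ad_apply_apply K L y u).trans (hy u (hba u.2)).symm
end

section
/- Let g be a finite-dimensional Lie algebra over a field K of characteristic 0 with dim(Der g) = dim g. If Z(g) ≠ 0, then the codimension of [g, g] in g is 0 or 1. -/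
/-!
Write `g` for the Lie algebra `L`.  If `[g, g]` has codimension at least two, there are linear
forms `φ`, `ψ` on `g` vanishing on `[g, g]` and elements `x`, `y` dual to them.  Then
`h = ker φ ∩ ker ψ` is an ideal of codimension two; let `U` be its centralizer in `g`.  The
operators `X = ad x` and `Y = ad y` preserve `U` and commute there, because `[x, y] ∈ h`.

For `a, b ∈ U` the map `φ ⊗ a + ψ ⊗ b` is a derivation exactly when `X b = Y a`.  Let `P ⊆ U × U`
be the space of these pairs.  The map `g × P → Der g` sending `(l, a, b)` to the sum of the
inner derivation of `l` and `φ ⊗ a + ψ ⊗ b` has kernel embedding into `U`: on the kernel, `l`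
centralizes `h` and determines `a` and `b`.  Hence `dim Der g ≥ dim g + dim P - dim U`, while
`dim P = 2 dim U - dim (X U + Y U)`.

Finally `X U + Y U ≠ U` (`exists_ne_add_of_commute`), since `X` and `Y` have a nonzero common kernel
vector in `U`, namely any nonzero element of the center.  So `dim P > dim U`, and therefore
`dim Der g > dim g`.
-/

/-- Commuting operators `X`, `Y` with a nonzero common kernel vector satisfy `X U + Y U ≠ U`.
Otherwise the
Fitting null component `N = ker X ^ n` satisfies `N = X N + Y N`; iterating,
`N = X ^ n N + Y N = Y N`, so `Y` is injective on `N`, which contains the common kernel vector. -/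
theorem exists_ne_add_of_commute {K U : Type*} [Field K] [AddCommGroup U] [Module K U]
    [FiniteDimensional K U] (X Y : Module.End K U) (hXY : ∀ u, X (Y u) = Y (X u))
    {v : U} (hv : v ≠ 0) (hX : X v = 0) (hY : Y v = 0) :
    ∃ w, ∀ a b, X a + Y b ≠ w := by
  by_contra! hsurj
  obtain ⟨n, hn, hcompl⟩ : ∃ n, 1 ≤ n ∧ IsCompl (LinearMap.ker (X ^ n)) (LinearMap.range (X ^ n)) :=
    ((Filter.eventually_ge_atTop 1).and X.eventually_isCompl_ker_pow_range_pow).exists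
  have hcomm : Commute X Y := LinearMap.ext hXY
  have hXpow (m : ℕ) (u : U) : (X ^ m) (X u) = X ((X ^ m) u) :=
    LinearMap.congr_fun (Commute.pow_left (Commute.refl X) m) u
  have hYpow (m : ℕ) (u : U) : (X ^ m) (Y u) = Y ((X ^ m) u) :=
    LinearMap.congr_fun (hcomm.pow_left m) u
  have hstep (w : U) (hw : (X ^ n) w = 0) :
      ∃ a b, (X ^ n) a = 0 ∧ (X ^ n) b = 0 ∧ X a + Y b = w := by
    obtain ⟨a, b, hab⟩ := hsurj w
    have hdec (u : U) : ∃ u₀ u₁, (X ^ n) u₀ = 0 ∧ u₀ + (X ^ n) u₁ = u := by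
      have hu : u ∈ LinearMap.ker (X ^ n) ⊔ LinearMap.range (X ^ n) := by
        rw [hcompl.sup_eq_top]; trivial
      obtain ⟨u₀, h₀, _, ⟨u₁, rfl⟩, h⟩ := Submodule.mem_sup.1 hu
      exact ⟨u₀, u₁, h₀, h⟩
    obtain ⟨a₀, a₁, ha, rfl⟩ := hdec a
    obtain ⟨b₀, b₁, hb, rfl⟩ := hdec b
    refine ⟨a₀, b₀, ha, hb, ?_⟩
    -- The difference lies in both Fitting components, hence vanishes.
    have hmem : (X ^ n) (X a₁ + Y b₁) = w - (X a₀ + Y b₀) := by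
      rw [← hab, map_add, hXpow, hYpow]; simp only [map_add]; abel
    have hker : w - (X a₀ + Y b₀) ∈ LinearMap.ker (X ^ n) := by
      rw [LinearMap.mem_ker, map_sub, map_add, hXpow, hYpow, hw, ha, hb]; simp
    have := Submodule.disjoint_def.1 hcompl.disjoint _ hker ⟨_, hmem⟩
    exact (sub_eq_zero.1 this).symm
  have hiter (m : ℕ) (w : U) (hw : (X ^ n) w = 0) :
      ∃ a b, (X ^ n) a = 0 ∧ (X ^ n) b = 0 ∧ (X ^ m) a + Y b = w := by
    induction m with
    | zero => exact ⟨w, 0, hw, by simp, by simp⟩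
    | succ m ih =>
      obtain ⟨a, b, ha, hb, rfl⟩ := ih
      obtain ⟨a', b', ha', hb', rfl⟩ := hstep a ha
      refine ⟨a', (X ^ m) b' + b, ha', ?_, ?_⟩
      · rw [map_add, hb, add_zero, ← Module.End.mul_apply, ← pow_add, add_comm, pow_add,
          Module.End.mul_apply, hb', map_zero]
      · rw [map_add, map_add, pow_succ, Module.End.mul_apply, hYpow, add_assoc]
  have hYN (u : U) (hu : u ∈ LinearMap.ker (X ^ n)) : Y u ∈ LinearMap.ker (X ^ n) := by
    rw [LinearMap.mem_ker] at hu ⊢; rw [hYpow, hu, map_zero]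
  have hYsurj : Function.Surjective (Y.restrict hYN) := by
    rintro ⟨w, hw⟩
    obtain ⟨a, b, ha, hb, hab⟩ := hiter n w hw
    exact ⟨⟨b, hb⟩, Subtype.ext (by rw [ha, zero_add] at hab; exact hab)⟩
  have hvN : v ∈ LinearMap.ker (X ^ n) := by
    obtain ⟨m, rfl⟩ := Nat.exists_eq_add_of_le' hn
    rw [LinearMap.mem_ker, pow_succ, Module.End.mul_apply, hX, map_zero]
  have h0 := LinearMap.injective_iff_surjective.2 hYsurj
    (a₁ := ⟨v, hvN⟩) (a₂ := 0) (Subtype.ext (by simpa using hY))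
  exact hv (congrArg Subtype.val h0)

/-- The centralizer of `ker φ ∩ ker ψ`. -/
def commonKerCentralizer {K L : Type*} [Field K] [LieRing L] [LieAlgebra K L]
    (φ ψ : L →ₗ[K] K) : Submodule K L where
  carrier := {u | ∀ h, φ h = 0 → ψ h = 0 → ⁅h, u⁆ = 0}
  zero_mem' := fun h _ _ => lie_zero h
  add_mem' := fun {a b} ha hb h h₁ h₂ => by rw [lie_add, ha h h₁ h₂, hb h h₁ h₂, add_zero]
  smul_mem' := fun c a ha h h₁ h₂ => by rw [lie_smul, ha h h₁ h₂, smul_zero]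

/-- Two independent linear forms vanishing on `[L, L]`, together with a nonzero center, force
`dim Der L > dim L`. -/
theorem finrank_lt_finrank_lieDerivation {K L : Type*} [Field K] [LieRing L] [LieAlgebra K L]
    [FiniteDimensional K L] (φ ψ : L →ₗ[K] K)
    (hφ : ∀ a b : L, φ ⁅a, b⁆ = 0) (hψ : ∀ a b : L, ψ ⁅a, b⁆ = 0)
    {x y : L} (hφx : φ x = 1) (hφy : φ y = 0) (hψx : ψ x = 0) (hψy : ψ y = 1)
    {z : L} (hz : z ≠ 0) (hzc : ∀ a : L, ⁅a, z⁆ = 0) :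
    Module.finrank K L < Module.finrank K (LieDerivation K L L) := by
  set U := commonKerCentralizer φ ψ with hU
  have hstable (s u : L) (hu : u ∈ U) : LieAlgebra.ad K L s u ∈ U := by
    intro h h₁ h₂
    rw [LieAlgebra.ad_apply, leibniz_lie, hu h h₁ h₂, lie_zero, add_zero]
    exact hu _ (hφ _ _) (hψ _ _)
  let X : Module.End K U := (LieAlgebra.ad K L x).restrict (hstable x)
  let Y : Module.End K U := (LieAlgebra.ad K L y).restrict (hstable y)
  have hXc (u : U) : (X u : L) = ⁅x, (u : L)⁆ := rfl
  have hYc (u : U) : (Y u : L) = ⁅y, (u : L)⁆ := rfl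
  have hXY (u : U) : X (Y u) = Y (X u) := by
    apply Subtype.ext
    rw [hXc, hYc, hYc, hXc, leibniz_lie x y, u.2 _ (hφ _ _) (hψ _ _), zero_add]
  -- Modulo the ideal centralized by `U`, an element is a combination of `x` and `y`.
  have hact (s : L) (u : U) : ⁅s, (u : L)⁆ = φ s • ⁅x, (u : L)⁆ + ψ s • ⁅y, (u : L)⁆ := by
    have h := u.2 (s - φ s • x - ψ s • y) (by simp [hφx, hφy]) (by simp [hψx, hψy])
    rw [sub_lie, sub_lie, smul_lie, smul_lie, sub_sub, sub_eq_zero] at h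
    exact h
  obtain ⟨w, hw⟩ := exists_ne_add_of_commute X Y hXY
    (v := ⟨z, fun h _ _ => hzc h⟩) (fun h => hz (congrArg Subtype.val h))
    (Subtype.ext (hzc x)) (Subtype.ext (hzc y))
  let δ : U × U →ₗ[K] U := X ∘ₗ LinearMap.snd K U U - Y ∘ₗ LinearMap.fst K U U
  have hδ (p : U × U) : δ p = X p.2 - Y p.1 := rfl
  have hδrank : Module.finrank K (LinearMap.range δ) < Module.finrank K U := by
    apply Submodule.finrank_lt
    intro htop
    obtain ⟨p, hp⟩ := LinearMap.range_eq_top.1 htop w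
    exact hw p.2 (-p.1) (by rw [map_neg, ← sub_eq_add_neg, ← hδ, hp])
  have hδker := LinearMap.finrank_range_add_finrank_ker δ
  rw [Module.finrank_prod] at hδker
  let F : L × LinearMap.ker δ →ₗ[K] LieDerivation K L L :=
    { toFun := fun q =>
        { toLinearMap := (LieDerivation.inner K L L q.1).toLinearMap +
            φ.smulRight (q.2.1.1 : L) + ψ.smulRight (q.2.1.2 : L)
          leibniz' := by
            intro s t
            have hp : ⁅x, (q.2.1.2 : L)⁆ = ⁅y, (q.2.1.1 : L)⁆ :=
              congrArg Subtype.val (sub_eq_zero.1 (LinearMap.mem_ker.1 q.2.2))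
            have hin := (LieDerivation.inner K L L q.1).leibniz' s t
            simp only [LinearMap.add_apply, LinearMap.smulRight_apply, hφ, hψ, zero_smul,
              add_zero, lie_add, lie_smul, hin]
            rw [hact s q.2.1.1, hact s q.2.1.2, hact t q.2.1.1, hact t q.2.1.2, hp]
            module }
      map_add' := by
        intro p q
        ext s
        change ⁅s, p.1 + q.1⁆ + φ s • ((p.2.1.1 : L) + q.2.1.1) +
          ψ s • ((p.2.1.2 : L) + q.2.1.2) =
          (⁅s, p.1⁆ + φ s • (p.2.1.1 : L) + ψ s • (p.2.1.2 : L)) +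
          (⁅s, q.1⁆ + φ s • (q.2.1.1 : L) + ψ s • (q.2.1.2 : L))
        rw [lie_add]
        module
      map_smul' := by
        intro c p
        ext s
        change ⁅s, c • p.1⁆ + φ s • (c • (p.2.1.1 : L)) + ψ s • (c • (p.2.1.2 : L)) =
          c • (⁅s, p.1⁆ + φ s • (p.2.1.1 : L) + ψ s • (p.2.1.2 : L))
        rw [lie_smul]
        module }
  have hF (q : L × LinearMap.ker δ) (s : L) :
      F q s = ⁅s, q.1⁆ + φ s • (q.2.1.1 : L) + ψ s • (q.2.1.2 : L) := rfl
  have hFker (q : L × LinearMap.ker δ) (hq : q ∈ LinearMap.ker F) (s : L) :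
      ⁅s, q.1⁆ + φ s • (q.2.1.1 : L) + ψ s • (q.2.1.2 : L) = 0 := by
    rw [← hF, LinearMap.mem_ker.1 hq]; rfl
  have hkerU (q : LinearMap.ker F) : q.1.1 ∈ U := by
    intro h h₁ h₂
    simpa [h₁, h₂] using hFker q.1 q.2 h
  let G : LinearMap.ker F →ₗ[K] U :=
    (LinearMap.fst K L (LinearMap.ker δ) ∘ₗ (LinearMap.ker F).subtype).codRestrict U hkerU
  have hG : Function.Injective G := by
    intro p q hpq
    have h₀ : p.1.1 = q.1.1 := congrArg Subtype.val hpq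
    have hx := (hFker p.1 p.2 x).trans (hFker q.1 q.2 x).symm
    have hy := (hFker p.1 p.2 y).trans (hFker q.1 q.2 y).symm
    simp only [h₀, hφx, hψx, hφy, hψy, one_smul, zero_smul, add_zero, add_right_inj] at hx hy
    exact Subtype.ext (Prod.ext h₀ (Subtype.ext (Prod.ext (Subtype.ext hx) (Subtype.ext hy))))
  have hGrank := LinearMap.finrank_le_finrank_of_injective hG
  have hFrank := LinearMap.finrank_range_add_finrank_ker F
  rw [Module.finrank_prod] at hFrank
  have hle := Submodule.finrank_le (LinearMap.range F)
  omega

variable (K L : Type*) [Field K] [CharZero K] [LieRing L] [LieAlgebra K L]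

theorem stmt18 [FiniteDimensional K L]
    (hdim : Module.finrank K (LieDerivation K L L) = Module.finrank K L)
    (hz : LieAlgebra.center K L ≠ ⊥) :
    Module.finrank K (L ⧸ (⁅(⊤ : LieIdeal K L), (⊤ : LieIdeal K L)⁆ : LieIdeal K L).toSubmodule)
        = 0 ∨
      Module.finrank K
        (L ⧸ (⁅(⊤ : LieIdeal K L), (⊤ : LieIdeal K L)⁆ : LieIdeal K L).toSubmodule) = 1 := by
  by_contra hcodim
  set I : Submodule K L := (⁅(⊤ : LieIdeal K L), (⊤ : LieIdeal K L)⁆ : LieIdeal K L).toSubmodule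
    with hI
  have htwo : 2 ≤ Module.finrank K (L ⧸ I) := by omega
  have hlie (a b : L) : I.mkQ ⁅a, b⁆ = 0 := by
    rw [Submodule.mkQ_apply, Submodule.Quotient.mk_eq_zero]
    exact LieSubmodule.lie_mem_lie (LieSubmodule.mem_top a) (LieSubmodule.mem_top b)
  let B := Module.finBasis K (L ⧸ I)
  let i : Fin (Module.finrank K (L ⧸ I)) := ⟨0, by omega⟩
  let j : Fin (Module.finrank K (L ⧸ I)) := ⟨1, by omega⟩
  have hij : i ≠ j := by simp [i, j]
  obtain ⟨x, hx⟩ := I.mkQ_surjective (B i)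
  obtain ⟨y, hy⟩ := I.mkQ_surjective (B j)
  obtain ⟨z, hzc, hz0⟩ : ∃ z ∈ LieAlgebra.center K L, z ≠ 0 := by
    by_contra! h
    exact hz ((LieSubmodule.eq_bot_iff _).2 h)
  have hlt := finrank_lt_finrank_lieDerivation (B.coord i ∘ₗ I.mkQ) (B.coord j ∘ₗ I.mkQ)
    (fun a b => by rw [LinearMap.comp_apply, hlie, map_zero])
    (fun a b => by rw [LinearMap.comp_apply, hlie, map_zero])
    (x := x) (y := y)
    (by rw [LinearMap.comp_apply, hx]; simp)
    (by rw [LinearMap.comp_apply, hy]; simp [hij.symm])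
    (by rw [LinearMap.comp_apply, hx]; simp [hij])
    (by rw [LinearMap.comp_apply, hy]; simp)
    hz0 (fun a => (LieModule.mem_maxTrivSubmodule K L L z).1 hzc a)
  omega
end
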